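/- arXiv:math/0201089 — 10 statements merged into one kernel-verified Lean document; each statement's English description precedes it below -/
import Mathlib

section
/- Let A be an associative ring and let B : A × A → A be a biadditive operation satisfying the Leibniz rule in both arguments. Then for all A₁, A₂, B₁, B₂ ∈ A one has [A₁,B₁]·B(A₂,B₂) = B(A₁,B₁)·[A₂,B₂], where [a,b] = ab − ba is the commutator. -/
/-- **Proposition 1.** In an associative ring, any biadditive operation `B`
satisfying the Leibniz rule in both arguments satisfies
`[A₁,B₁]·B(A₂,B₂) = B(A₁,B₁)·[A₂,B₂]`, where `[a,b] = a*b - b*a`. -/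
theorem leibniz_biadditive_commutator_relation
    {A : Type*} [NonUnitalRing A] (B : A → A → A)
    (haddl : ∀ a b c : A, B (a + b) c = B a c + B b c)
    (haddr : ∀ a b c : A, B a (b + c) = B a b + B a c)
    (hleib_r : ∀ a b₁ b₂ : A, B a (b₁ * b₂) = b₁ * B a b₂ + B a b₁ * b₂)
    (hleib_l : ∀ a b₁ b₂ : A, B (b₁ * b₂) a = b₁ * B b₂ a + B b₁ a * b₂) :
    ∀ A₁ A₂ B₁ B₂ : A,
      (A₁ * B₁ - B₁ * A₁) * B A₂ B₂ = B A₁ B₁ * (A₂ * B₂ - B₂ * A₂) := by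
  intro A₁ A₂ B₁ B₂
  have h1 := hleib_l (B₁ * B₂) A₁ A₂
  have h2 := hleib_r (A₁ * A₂) B₁ B₂
  have h := h1.symm.trans h2
  simp only [hleib_l, hleib_r, mul_add, add_mul, mul_assoc] at h
  simp only [sub_mul, mul_sub, mul_assoc]
  rw [← sub_eq_zero] at h ⊢
  rw [← h]
  abel
end

section
/- Let A be a unital associative ring which is strongly non-commutative, i.e. the two-sided ideal of A generated by all commutators [a,b] = ab − ba equals A. If B : A × A → A is a biadditive operation satisfying the Leibniz rule in both arguments, then there exists a central element C ∈ A such that B(a,b) = C·(ab − ba) for all a, b ∈ A. -/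
/-- **Theorem 1 (first part).** If `A` is a unital associative ring that is
strongly non-commutative (the two-sided ideal generated by all commutators is
all of `A`), then every biadditive operation satisfying the Leibniz rule in
both arguments is of the form `B(a,b) = C·(a*b - b*a)` for a central `C`. -/
theorem leibniz_bracket_eq_central_mul_commutator
    {A : Type*} [Ring A]
    (hSNC : ∀ I : TwoSidedIdeal A, (∀ a b : A, a * b - b * a ∈ I) → I = ⊤)
    (B : A → A → A)
    (haddl : ∀ a b c : A, B (a + b) c = B a c + B b c)
    (haddr : ∀ a b c : A, B a (b + c) = B a b + B a c)
    (hleib_r : ∀ a b₁ b₂ : A, B a (b₁ * b₂) = b₁ * B a b₂ + B a b₁ * b₂)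
    (hleib_l : ∀ a b₁ b₂ : A, B (b₁ * b₂) a = b₁ * B b₂ a + B b₁ a * b₂) :
    ∃ C : A, (∀ x : A, C * x = x * C) ∧ ∀ a b : A, B a b = C * (a * b - b * a) := by
  have h1 : ∀ a b c d : A, (a * b - b * a) * B c d = B a b * (c * d - d * c) := by
    intro a b c d
    have e1 := hleib_l (b * d) a c
    rw [hleib_r (a * c), hleib_l, hleib_l, hleib_r, hleib_r] at e1
    rw [← sub_eq_zero] at e1 ⊢
    rw [← neg_eq_zero, ← e1]
    noncomm_ring
  have h2 : ∀ a b x c d : A,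
      (a * b - b * a) * x * B c d = B a b * x * (c * d - d * c) := by
    intro a b x c d
    have e1 := h1 a b (x * c) d
    have e2 := congrArg (· * c) (h1 a b x d)
    simp only [hleib_l] at e1 e2
    rw [← sub_eq_zero] at e1 e2 ⊢
    have e3 := (congrArg₂ (· - ·) e1 e2).trans (sub_zero 0)
    rw [← e3]
    noncomm_ring
  have key : ∀ S : Set A, (0 : A) ∈ S → (∀ {x y}, x ∈ S → y ∈ S → x + y ∈ S) →
      (∀ {x}, x ∈ S → -x ∈ S) → (∀ {x y}, y ∈ S → x * y ∈ S) →
      (∀ {x y}, x ∈ S → x * y ∈ S) → (∀ a b : A, a * b - b * a ∈ S) → (1 : A) ∈ S := by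
    intro S h0 ha hn hl hr hc
    have := hSNC (TwoSidedIdeal.mk' S h0 ha hn hl hr) (by
      intro a b
      rw [TwoSidedIdeal.mem_mk']
      exact hc a b)
    have h : (1 : A) ∈ TwoSidedIdeal.mk' S h0 ha hn hl hr := by rw [this]; trivial
    rwa [TwoSidedIdeal.mem_mk'] at h
  obtain ⟨C, hC⟩ := key {u | ∃ c, ∀ a b z : A, u * z * B a b = c * z * (a * b - b * a) ∧
      (a * b - b * a) * z * c = B a b * z * u}
    ⟨0, by simp⟩
    (by
      rintro x y ⟨c, hc⟩ ⟨d, hd⟩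
      refine ⟨c + d, fun a b z => ⟨?_, ?_⟩⟩
      · rw [add_mul, add_mul, (hc a b z).1, (hd a b z).1, add_mul, add_mul]
      · rw [mul_add, (hc a b z).2, (hd a b z).2, mul_add])
    (by
      rintro x ⟨c, hc⟩
      refine ⟨-c, fun a b z => ⟨?_, ?_⟩⟩
      · rw [neg_mul, neg_mul, (hc a b z).1, neg_mul, neg_mul]
      · rw [mul_neg, (hc a b z).2, mul_neg])
    (by
      rintro x y ⟨c, hc⟩
      refine ⟨x * c, fun a b z => ⟨?_, ?_⟩⟩
      · have := (hc a b z).1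
        rw [mul_assoc x, mul_assoc x, this]; simp only [mul_assoc]
      · have := (hc a b (z * x)).2
        simpa only [mul_assoc] using this)
    (by
      rintro x y ⟨c, hc⟩
      refine ⟨c * y, fun a b z => ⟨?_, ?_⟩⟩
      · have := (hc a b (y * z)).1
        simpa only [mul_assoc] using this
      · have := (hc a b z).2
        rw [← mul_assoc, this, mul_assoc])
    (by
      intro a b
      exact ⟨B a b, fun c d z => ⟨h2 a b z c d, (h2 c d z a b)⟩⟩)
  refine ⟨C, fun x => ?_, fun a b => by simpa using (hC a b 1).1⟩
  have := key {u | ∀ z, u * z * (C * x - x * C) = 0}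
    (by intro z; simp)
    (by intro u v hu hv z; rw [add_mul, add_mul, hu, hv, add_zero])
    (by intro u hu z; rw [neg_mul, neg_mul, hu, neg_zero])
    (by intro u v hv z; rw [mul_assoc u, mul_assoc u, hv, mul_zero])
    (by intro u v hu z; rw [mul_assoc u, hu])
    (by
      intro a b z
      have e1 := (hC a b z).2
      have e2 := (hC a b (z * x)).2
      rw [mul_sub, ← mul_assoc, e1, ← mul_assoc, mul_assoc _ z x, e2]
      simp [mul_assoc]) 1
  simpa [sub_eq_zero] using this
end

section
/- Let A be a unital associative ring which is strongly non-commutative, i.e. the two-sided ideal of A generated by all commutators equals A. Then every biadditive operation B : A × A → A satisfying the Leibniz rule in both arguments is a Lie bracket: it is skew-symmetric, B(a,b) = −B(b,a), and satisfies the Jacobi identity B(a,B(b,c)) = B(B(a,b),c) + B(b,B(a,c)) for all a, b, c ∈ A. -/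
theorem aux_span {A : Type*} [Ring A]
    (hSNC : ∀ I : TwoSidedIdeal A, (∀ a b : A, a * b - b * a ∈ I) → I = ⊤)
    (I : TwoSidedIdeal A)
    (h : ∀ u v x : A, (u * v - v * u) * x * (u * v - v * u) ∈ I) : I = ⊤ := by
  have hle : ∀ (z : A) (L : TwoSidedIdeal A), z ∈ L → TwoSidedIdeal.span {z} ≤ L := by
    intro z L hz
    rw [TwoSidedIdeal.span_le]
    simpa using hz
  have hmem : ∀ z : A, z ∈ TwoSidedIdeal.span {z} := fun z =>
    TwoSidedIdeal.subset_span (Set.mem_singleton z)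
  have mono : ∀ (K L M : TwoSidedIdeal A), L ≤ M → K ⊔ L = ⊤ → K ⊔ M = ⊤ := by
    intro K L M h1 h2
    exact top_le_iff.mp (h2 ▸ sup_le_sup_left h1 K)
  let N : TwoSidedIdeal A := TwoSidedIdeal.mk'
    {z | ∀ K : TwoSidedIdeal A, I ≤ K → K ⊔ TwoSidedIdeal.span {z} = ⊤ → K = ⊤}
    (by
      intro K _ hK
      rwa [sup_eq_left.mpr (hle 0 K K.zero_mem)] at hK)
    (by
      intro x y hx hy K hI hK
      apply hx K hI
      apply hy _ (le_trans hI le_sup_left)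
      rw [sup_assoc]
      refine mono _ _ _ (hle _ _ ?_) hK
      exact TwoSidedIdeal.add_mem _
        ((le_sup_left : TwoSidedIdeal.span {x} ≤ _) (hmem x))
        ((le_sup_right : TwoSidedIdeal.span {y} ≤ _) (hmem y)))
    (by
      intro x hx K hI hK
      exact hx K hI (mono _ _ _ (hle _ _ (TwoSidedIdeal.neg_mem _ (hmem x))) hK))
    (by
      intro x y hx K hI hK
      exact hx K hI (mono _ _ _ (hle _ _ (TwoSidedIdeal.mul_mem_left _ _ _ (hmem y))) hK))
    (by
      intro x y hx K hI hK
      exact hx K hI (mono _ _ _ (hle _ _ (TwoSidedIdeal.mul_mem_right _ _ _ (hmem x))) hK))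
  have hN : N = ⊤ := by
    apply hSNC
    intro u v
    rw [TwoSidedIdeal.mem_mk']
    intro K hI hK
    set c := u * v - v * u with hc
    let L : TwoSidedIdeal A := TwoSidedIdeal.mk' {z | ∀ x, c * x * z ∈ K}
      (by intro x; simpa using K.zero_mem)
      (by intro x y hx hy t; rw [mul_add]; exact K.add_mem (hx t) (hy t))
      (by intro x hx t; rw [mul_neg]; exact K.neg_mem (hx t))
      (by
        intro x y hy t
        have := hy (t * x)
        simpa [mul_assoc] using this)
      (by
        intro x y hx t
        have := K.mul_mem_right _ y (hx t)
        simpa [mul_assoc] using this)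
    have hL : L = ⊤ := by
      rw [← top_le_iff, ← hK]
      refine sup_le ?_ (hle _ _ ?_)
      · intro z hz
        rw [TwoSidedIdeal.mem_mk']
        intro x
        exact K.mul_mem_left _ _ hz
      · rw [TwoSidedIdeal.mem_mk']
        intro x
        exact hI (h u v x)
    have h1 : (1 : A) ∈ L := by rw [hL]; trivial
    rw [TwoSidedIdeal.mem_mk'] at h1
    have h2 : c ∈ K := by simpa using h1 1
    rwa [sup_eq_left.mpr (hle c K h2)] at hK
  have h1 : (1 : A) ∈ N := by rw [hN]; trivial
  rw [TwoSidedIdeal.mem_mk'] at h1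
  apply h1 I le_rfl
  rw [← top_le_iff]
  intro z _
  have := TwoSidedIdeal.mul_mem_left _ z _
    ((le_sup_right : TwoSidedIdeal.span {(1:A)} ≤ I ⊔ _) (hmem 1))
  simpa using this

theorem aux_ann2 {A : Type*} [Ring A]
    (hSNC : ∀ I : TwoSidedIdeal A, (∀ a b : A, a * b - b * a ∈ I) → I = ⊤)
    (s : A)
    (h : ∀ y u v x : A, s * y * ((u * v - v * u) * x * (u * v - v * u)) = 0) : s = 0 := by
  let L : TwoSidedIdeal A := TwoSidedIdeal.mk' {z | ∀ x, s * x * z = 0}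
      (by intro x; simp)
      (by intro x y hx hy t; rw [mul_add, hx t, hy t, add_zero])
      (by intro x hx t; rw [mul_neg, hx t, neg_zero])
      (by
        intro x y hy t
        have := hy (t * x)
        simpa [mul_assoc] using this)
      (by
        intro x y hx t
        rw [← mul_assoc, hx t, zero_mul])
  have hL : L = ⊤ := by
    apply aux_span hSNC
    intro u v x
    rw [TwoSidedIdeal.mem_mk']
    intro y
    exact h y u v x
  have h1 : (1 : A) ∈ L := by rw [hL]; trivial
  rw [TwoSidedIdeal.mem_mk'] at h1
  simpa using h1 1

/-- **Theorem 1 (second part).** If `A` is a unital associative ring that is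
strongly non-commutative, then every biadditive operation satisfying the
Leibniz rule in both arguments is a Lie bracket: it is skew-symmetric and
satisfies the Jacobi identity. -/
theorem leibniz_bracket_is_lie_bracket
    {A : Type*} [Ring A]
    (hSNC : ∀ I : TwoSidedIdeal A, (∀ a b : A, a * b - b * a ∈ I) → I = ⊤)
    (B : A → A → A)
    (haddl : ∀ a b c : A, B (a + b) c = B a c + B b c)
    (haddr : ∀ a b c : A, B a (b + c) = B a b + B a c)
    (hleib_r : ∀ a b₁ b₂ : A, B a (b₁ * b₂) = b₁ * B a b₂ + B a b₁ * b₂)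
    (hleib_l : ∀ a b₁ b₂ : A, B (b₁ * b₂) a = b₁ * B b₂ a + B b₁ a * b₂) :
    (∀ a b : A, B a b = - B b a) ∧
      (∀ a b c : A, B a (B b c) = B (B a b) c + B b (B a c)) := by
  have hann : ∀ s : A, (∀ x u v : A, s * x * (u * v - v * u) = 0) → s = 0 := by
    intro s hs
    apply aux_ann2 hSNC
    intro y u v x
    have := hs (y * (u * v - v * u) * x) u v
    simpa only [mul_assoc] using this
  have hnegr : ∀ a b, B a (-b) = - B a b := fun a b => (AddMonoidHom.mk' (B a) (haddr a)).map_neg b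
  have hnegl : ∀ a b, B (-a) b = - B a b := fun a b =>
    (AddMonoidHom.mk' (fun x => B x b) (fun x y => haddl x y b)).map_neg a
  have hsubr : ∀ a b c, B a (b - c) = B a b - B a c := by
    intro a b c; rw [sub_eq_add_neg, haddr, hnegr, sub_eq_add_neg]
  have key0 : ∀ a b u v, (a * b - b * a) * B u v = B a b * (u * v - v * u) := by
    intro a b u v
    have h1 : B (a * u) (b * v) = a * (b * B u v + B u b * v) + (b * B a v + B a b * v) * u := by
      rw [hleib_l, hleib_r, hleib_r]
    have h2 : B (a * u) (b * v) = b * (a * B u v + B a v * u) + (a * B u b + B a b * u) * v := by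
      rw [hleib_r, hleib_l, hleib_l]
    have h3 := h1.symm.trans h2
    rw [← sub_eq_zero] at h3 ⊢
    rw [← h3]
    noncomm_ring
  have key : ∀ a b u v x, (a * b - b * a) * x * B u v = B a b * x * (u * v - v * u) := by
    intro a b u v x
    have h1 := key0 a b (x * u) v
    have h2 := key0 a b x v
    rw [hleib_l, mul_add, ← mul_assoc, ← mul_assoc, h2] at h1
    rw [eq_sub_of_add_eq h1]
    noncomm_ring
  have halt : ∀ a, B a a = 0 := by
    intro a
    apply hann
    intro x u v
    rw [← key]; simp
  have hskew : ∀ a b, B a b = - B b a := by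
    intro a b
    have := halt (a + b)
    rw [haddl, haddr, haddr, halt, halt, zero_add, add_zero] at this
    exact eq_neg_of_add_eq_zero_left this
  refine ⟨hskew, ?_⟩
  obtain ⟨J, hJ⟩ : ∃ J : A → A → A → A, ∀ w a b,
      J w a b = B w (B a b) - B (B w a) b - B a (B w b) := ⟨_, fun _ _ _ => rfl⟩
  have hJadd : ∀ w w' a b, J (w + w') a b = J w a b + J w' a b := by
    intro w w' a b
    simp only [hJ, haddl, haddr]; abel
  have hJalt : ∀ u v, J u u v = 0 := by
    intro u v
    have h0 : B 0 v = 0 := by simpa using haddl 0 0 v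
    simp [hJ, halt, h0]
  have hJkey : ∀ w a b u v x, J w a b * x * (u * v - v * u) = (a * b - b * a) * x * J w u v := by
    intro w a b u v x
    have h := congrArg (B w) (key a b u v x)
    simp only [hleib_r, hsubr] at h
    have e1 := key (B w a) b u v x
    have e2 := key a (B w b) u v x
    have e3 := key a b (B w u) v x
    have e4 := key a b u (B w v) x
    have e5 := key a b u v (B w x)
    rw [← sub_eq_zero] at h e1 e2 e3 e4 e5 ⊢
    have : ∀ p q r s t o : A, p = 0 → q = 0 → r = 0 → s = 0 → t = 0 → o = 0 →
      - p + q + r + s + t + o = 0 := by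
      intro p q r s t o h1 h2 h3 h4 h5 h6; simp [h1, h2, h3, h4, h5, h6]
    rw [← this _ _ _ _ _ _ h e1 e2 e3 e4 e5, hJ, hJ]
    noncomm_ring
  have hphi : ∀ u a b v x, J u a b * x * (u * v - v * u) = 0 := by
    intro u a b v x
    rw [hJkey, hJalt, mul_zero]
  have hphi2 : ∀ w u a b v x,
      J w a b * x * (u * v - v * u) = - (J u a b * x * (w * v - v * w)) := by
    intro w u a b v x
    have h := hphi (w + u) a b v x
    have h1 := hphi w a b v x
    have h2 := hphi u a b v x
    rw [hJadd] at h
    rw [eq_neg_iff_add_eq_zero]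
    have : ∀ p q r : A, p = 0 → q = 0 → r = 0 → p - q - r = 0 := by
      intro p q r h1 h2 h3; simp [h1, h2, h3]
    rw [← this _ _ _ h h1 h2]
    noncomm_ring
  intro a b c
  have hz : J a b c = 0 := by
    apply aux_ann2 hSNC
    intro y u v x
    rw [← mul_assoc, ← mul_assoc, hphi2, neg_mul, neg_mul]
    have := hphi u b c v (y * (a * v - v * a) * x)
    simp only [← mul_assoc] at this
    rw [this, neg_zero]
  rw [hJ, sub_sub, sub_eq_zero] at hz
  exact hz
end

section
/- Let k be a commutative unital ring and A a unital associative k-algebra which is strongly non-commutative (the two-sided ideal generated by all commutators equals A) and whose center is trivial, i.e. every central element of A lies in k·1. Then for every k-bilinear operation B : A × A → A satisfying the Leibniz rule in both arguments there exists λ ∈ k such that B(a,b) = λ·(ab − ba) for all a, b ∈ A. -/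
/-- **Theorem 1 (last part).** If `A` is a strongly non-commutative unital
associative algebra over a commutative ring `k` with trivial center, then every
`k`-bilinear operation satisfying the Leibniz rule in both arguments is
`λ·[a,b]` for some `λ ∈ k`. -/
theorem leibniz_bracket_eq_scalar_mul_commutator
    {k : Type*} [CommRing k] {A : Type*} [Ring A] [Algebra k A]
    (hSNC : ∀ I : TwoSidedIdeal A, (∀ a b : A, a * b - b * a ∈ I) → I = ⊤)
    (hcenter : ∀ c : A, (∀ x : A, c * x = x * c) → ∃ t : k, c = algebraMap k A t)
    (B : A → A → A)
    (haddl : ∀ a b c : A, B (a + b) c = B a c + B b c)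
    (haddr : ∀ a b c : A, B a (b + c) = B a b + B a c)
    (hsmull : ∀ (t : k) (a b : A), B (t • a) b = t • B a b)
    (hsmulr : ∀ (t : k) (a b : A), B a (t • b) = t • B a b)
    (hleib_r : ∀ a b₁ b₂ : A, B a (b₁ * b₂) = b₁ * B a b₂ + B a b₁ * b₂)
    (hleib_l : ∀ a b₁ b₂ : A, B (b₁ * b₂) a = b₁ * B b₂ a + B b₁ a * b₂) :
    ∃ lam : k, ∀ a b : A, B a b = lam • (a * b - b * a) := by
  have key0 : ∀ a b c d : A, (a * c - c * a) * B b d = B a c * (b * d - d * b) := by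
    intro a b c d
    have h1 := hleib_l (c * d) a b
    rw [hleib_r, hleib_r, hleib_r, hleib_l, hleib_l] at h1
    rw [← sub_eq_zero] at h1 ⊢
    rw [← neg_eq_zero, ← h1]
    noncomm_ring
  have key : ∀ a b c d x : A,
      (a * c - c * a) * x * B b d = B a c * x * (b * d - d * b) := by
    intro a b c d x
    have h1 := key0 a (x * b) c d
    have h2 := key0 a x c d
    rw [hleib_l, mul_add, ← mul_assoc, ← mul_assoc, h2] at h1
    rw [← sub_eq_zero] at h1 ⊢
    rw [← h1]
    noncomm_ring
  let I : TwoSidedIdeal A := TwoSidedIdeal.mk'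
    {u | ∃ v, ∀ x b d, u * x * B b d = v * x * (b * d - d * b)}
    ⟨0, by simp⟩
    (by
      rintro u u' ⟨v, hv⟩ ⟨v', hv'⟩
      exact ⟨v + v', fun x b d => by simp only [add_mul, hv, hv']⟩)
    (by
      rintro u ⟨v, hv⟩
      exact ⟨-v, fun x b d => by simp only [neg_mul, hv]⟩)
    (by
      rintro z u ⟨v, hv⟩
      refine ⟨z * v, fun x b d => ?_⟩
      have := congrArg (z * ·) (hv x b d)
      simpa only [mul_assoc] using this)
    (by
      rintro u z ⟨v, hv⟩
      refine ⟨v * z, fun x b d => ?_⟩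
      have := hv (z * x) b d
      simpa only [mul_assoc] using this)
  have hI : I = ⊤ := hSNC I fun a c => by
    rw [TwoSidedIdeal.mem_mk']
    exact ⟨B a c, fun x b d => key a b c d x⟩
  have h1 : (1 : A) ∈ I := by rw [hI]; trivial
  rw [TwoSidedIdeal.mem_mk'] at h1
  obtain ⟨v, hv⟩ := h1
  simp only [one_mul] at hv
  let J : TwoSidedIdeal A := TwoSidedIdeal.mk'
    {w | ∀ x y, (v * x - x * v) * y * w = 0}
    (by simp)
    (by
      intro w w' h h' x y
      rw [mul_add, h, h', add_zero])
    (by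
      intro w h x y
      rw [mul_neg, h, neg_zero])
    (by
      intro z w h x y
      rw [← mul_assoc, mul_assoc _ y z, h])
    (by
      intro w z h x y
      rw [← mul_assoc, h, zero_mul])
  have hJ : J = ⊤ := hSNC J fun b d => by
    rw [TwoSidedIdeal.mem_mk']
    intro x y
    have e1 := hv (x * y) b d
    have e2 := congrArg (x * ·) (hv y b d)
    simp only [sub_mul _ _ y, sub_mul _ _ (b * d - d * b)]
    rw [sub_eq_zero]
    simp only [mul_assoc] at e1 e2 ⊢
    rw [← e1, e2]
  have h2 : (1 : A) ∈ J := by rw [hJ]; trivial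
  rw [TwoSidedIdeal.mem_mk'] at h2
  obtain ⟨t, ht⟩ := hcenter v fun x => by
    have := h2 x 1
    rw [mul_one, mul_one] at this
    exact sub_eq_zero.mp this
  refine ⟨t, fun a b => ?_⟩
  have := hv 1 a b
  rw [one_mul, mul_one, ht] at this
  rw [this, Algebra.smul_def]
end

section
/- Let k be a commutative unital ring, n ≥ 2, and A = Matrix n n k the algebra of n×n matrices over k. Then every k-bilinear operation B : A × A → A satisfying the Leibniz rule in both arguments is of the form B(X,Y) = λ·(XY − YX) for some λ ∈ k. -/
/-- **Corollary 1.** Every `k`-bilinear operation on the matrix algebra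
`gl(n,k)` (`n ≥ 2`, `k` a commutative unital ring) satisfying the Leibniz rule
in both arguments is of the form `B(X,Y) = λ·(XY - YX)` for some `λ ∈ k`. -/
theorem leibniz_bracket_on_matrices
    {k : Type*} [CommRing k] (n : ℕ) (hn : 2 ≤ n)
    (B : Matrix (Fin n) (Fin n) k → Matrix (Fin n) (Fin n) k → Matrix (Fin n) (Fin n) k)
    (haddl : ∀ a b c, B (a + b) c = B a c + B b c)
    (haddr : ∀ a b c, B a (b + c) = B a b + B a c)
    (hsmull : ∀ (t : k) a b, B (t • a) b = t • B a b)
    (hsmulr : ∀ (t : k) a b, B a (t • b) = t • B a b)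
    (hleib_r : ∀ a b₁ b₂, B a (b₁ * b₂) = b₁ * B a b₂ + B a b₁ * b₂)
    (hleib_l : ∀ a b₁ b₂, B (b₁ * b₂) a = b₁ * B b₂ a + B b₁ a * b₂) :
    ∃ lam : k, ∀ X Y, B X Y = lam • (X * Y - Y * X) := by
  have h1 : ∀ a b c d, (a * c - c * a) * B b d = B a c * (b * d - d * b) := by
    intro a b c d
    have e1 := hleib_l (c * d) a b
    have e2 := hleib_r (a * b) c d
    rw [hleib_r b c d, hleib_r a c d] at e1
    rw [hleib_l d a b, hleib_l c a b, e1] at e2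
    have e3 := sub_eq_zero.mpr e2
    rw [← sub_eq_zero, ← e3]
    noncomm_ring
  have h2 : ∀ a b c d z, (a * c - c * a) * b * B z d = B a c * b * (z * d - d * z) := by
    intro a b c d z
    have e1 := h1 a (b * z) c d
    have e2 := congrArg (· * z) (h1 a b c d)
    rw [hleib_l d b z, mul_add, ← mul_assoc _ (B b d) z, e2] at e1
    have e3 := sub_eq_zero.mpr e1
    rw [← sub_eq_zero, ← e3]
    noncomm_ring
  let p : Fin n := ⟨0, by omega⟩
  let q : Fin n := ⟨1, by omega⟩
  have hpq : q ≠ p := by simp [p, q]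
  refine ⟨B (Matrix.single p p 1) (Matrix.single p q 1) p q, fun X Y => ?_⟩
  ext i j
  have h := congrFun (congrFun (h2 (Matrix.single p p 1) (Matrix.single q i 1)
    (Matrix.single p q 1) Y X) p) j
  rw [Matrix.single_mul_single_same, Matrix.single_mul_single_of_ne _ _ _ _ hpq, sub_zero,
    Matrix.single_mul_single_same, mul_assoc (B _ _), Matrix.mul_apply (M := B _ _),
    Finset.sum_eq_single q] at h
  · simpa using h
  · intro b _ hb
    rw [Matrix.single_mul_apply_of_ne _ _ _ _ _ hb, mul_zero]
  · simp
end

section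
/- Let k be a field of characteristic zero and A a commutative unital k-algebra with no nonzero nilpotent elements. Let B : A × A → A be a k-bilinear bracket which is a bidifferential operator of some order n (i.e. of differential order ≤ n in each argument separately) and satisfies the Loday Jacobi identity B(x,B(y,z)) = B(B(x,y),z) + B(y,B(x,z)) for all x, y, z ∈ A. Then B is of order ≤ 1 in each argument: δ(u)δ(v) applied to B(x,·) vanishes and δ(u)δ(v) applied to B(·,x) vanishes, for all u, v, x ∈ A. -/
/-- `(δ(x)D)(y) = D(x*y) - x*D(y)`. -/
def delta {A : Type*} [NonUnitalNonAssocRing A] (x : A) (D : A → A) : A → A :=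
  fun y => D (x * y) - x * D y

/-- `D : A → A` is a differential operator of order `≤ n` if
`δ(x₁)⋯δ(x_{n+1}) D = 0` for all `x₁, …, x_{n+1} ∈ A`. -/
def IsDiffOpLE {A : Type*} [NonUnitalNonAssocRing A] : ℕ → (A → A) → Prop
  | 0, D => ∀ x : A, delta x D = 0
  | n + 1, D => ∀ x : A, IsDiffOpLE n (delta x D)

set_option linter.unusedSectionVars false
namespace LD
open Finset
section
variable {k : Type*} [Field k] [CharZero k]

lemma vanish {M : Type*} [AddCommGroup M] [Module k M] (n : ℕ) (a : ℕ → M)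
    (h : ∀ t : k, ∑ i ∈ range n, t ^ i • a i = 0) : ∀ i < n, a i = 0 := by
  intro i hi
  rw [← Module.forall_dual_apply_eq_zero_iff k]
  intro f
  have hp : (∑ i ∈ range n, Polynomial.monomial i (f (a i)) : Polynomial k) = 0 := by
    apply Polynomial.funext
    intro t
    have := congrArg f (h t)
    simp only [map_sum, map_smul, smul_eq_mul, map_zero] at this
    simp only [Polynomial.eval_finsetSum, Polynomial.eval_monomial, Polynomial.eval_zero]
    rw [← this]
    exact sum_congr rfl fun _ _ => mul_comm _ _
  have := congrArg (fun p => Polynomial.coeff p i) hp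
  simpa [Polynomial.finsetSum_coeff, Polynomial.coeff_monomial, hi] using this

lemma nsmul_zero {M : Type*} (k : Type*) [Field k] [CharZero k] [AddCommGroup M] [Module k M] {n : ℕ} (hn : n ≠ 0) {a : M}
    (h : n • a = 0) : a = 0 := by
  rw [← Nat.cast_smul_eq_nsmul k] at h
  exact (smul_eq_zero.1 h).resolve_left (by exact_mod_cast hn)

lemma pol {M N : Type*} [Ring M] [Algebra k M] [AddCommGroup N] [Module k N]
    (Φ : M →ₗ[k] N) (x y : M) (hxy : Commute x y) (n : ℕ)
    (h : ∀ t : k, Φ ((t • x + y) ^ n) = 0) (i j : ℕ) (hij : i + j = n) : Φ (x ^ i * y ^ j) = 0 := by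
  have := vanish (k := k) (n + 1) (fun i => n.choose i • Φ (x ^ i * y ^ (n - i))) (by
    intro t
    rw [← h t, (hxy.smul_left t).add_pow, map_sum]
    refine sum_congr rfl fun i _ => ?_
    rw [smul_pow, ← nsmul_eq_mul', smul_mul_assoc, map_nsmul, map_smul, smul_comm]) i (by omega)
  have h2 := nsmul_zero k (Nat.choose_pos (by omega : i ≤ n)).ne' this
  rwa [show n - i = j by omega] at h2

lemma leib {R : Type*} [Ring R] [Algebra k R] (d : Module.End k R)
    (hd : ∀ a b, d (a * b) = d a * b + a * d b) (n : ℕ) (a b : R) :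
    (d ^ n) (a * b) = ∑ p ∈ antidiagonal n, n.choose p.1 • ((d ^ p.1) a * (d ^ p.2) b) := by
  induction n with
  | zero => simp
  | succ n ih =>
    rw [Finset.sum_antidiagonal_choose_succ_nsmul (fun i j => (d ^ i) a * (d ^ j) b), pow_succ',
      Module.End.mul_apply, ih, map_sum, ← sum_add_distrib]
    refine sum_congr rfl fun p hp => ?_
    have e : n.choose p.2 = n.choose p.1 := by
      have := mem_antidiagonal.1 hp
      exact (Nat.choose_symm_of_eq_add (by omega))
    rw [map_nsmul, hd, nsmul_add, pow_succ', pow_succ', Module.End.mul_apply, Module.End.mul_apply, e,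
      add_comm]

/-- polynomial functions -/
def PF (k : Type*) [Field k] (M : Type*) [AddCommGroup M] [Module k M] : Submodule k (k → M) :=
  Submodule.span k {f | ∃ (i : ℕ) (a : M), f = fun t => t ^ i • a}

lemma PF.mono {M : Type*} [AddCommGroup M] [Module k M] (i : ℕ) (a : M) :
    (fun t : k => t ^ i • a) ∈ PF k M := Submodule.subset_span ⟨i, a, rfl⟩

lemma PF.map₂ {M N P : Type*} [AddCommGroup M] [Module k M] [AddCommGroup N] [Module k N]
    [AddCommGroup P] [Module k P] (β : M →ₗ[k] N →ₗ[k] P) {f : k → M} {g : k → N}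
    (hf : f ∈ PF k M) (hg : g ∈ PF k N) : (fun t => β (f t) (g t)) ∈ PF k P := by
  induction hf using Submodule.span_induction with
  | mem f hf =>
    obtain ⟨i, a, rfl⟩ := hf
    induction hg using Submodule.span_induction with
    | mem g hg =>
      obtain ⟨j, b, rfl⟩ := hg
      convert PF.mono (k := k) (i + j) (β a b) using 2 with t
      simp [pow_add, smul_smul, mul_comm]
    | zero => convert (PF k P).zero_mem using 1; ext; simp
    | add g g' _ _ h h' => convert (PF k P).add_mem h h' using 1; ext; simp
    | smul c g _ h => convert (PF k P).smul_mem c h using 1; ext; simp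
  | zero => convert (PF k P).zero_mem using 1; ext; simp
  | add g g' _ _ h h' => convert (PF k P).add_mem h h' using 1; ext; simp
  | smul c g _ h => convert (PF k P).smul_mem c h using 1; ext; simp

lemma PF.const {M : Type*} [AddCommGroup M] [Module k M] (a : M) :
    (fun _ : k => a) ∈ PF k M := by simpa using PF.mono (k := k) 0 a

lemma PF.map {M N : Type*} [AddCommGroup M] [Module k M] [AddCommGroup N] [Module k N]
    (β : M →ₗ[k] N) {f : k → M} (hf : f ∈ PF k M) : (fun t => β (f t)) ∈ PF k N :=
  PF.map₂ (LinearMap.id (R := k) (M := M →ₗ[k] N)) (PF.const β) hf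

lemma PF.pow {M : Type*} [Ring M] [Algebra k M] {f : k → M} (hf : f ∈ PF k M) (n : ℕ) :
    (fun t => f t ^ n) ∈ PF k M := by
  induction n with
  | zero => simpa using PF.const (k := k) (1 : M)
  | succ n ih => simpa [pow_succ] using PF.map₂ (LinearMap.mul k M) ih hf

lemma PF.poly {A : Type*} [CommRing A] [Algebra k A] {f : k → A} (hf : f ∈ PF k A) :
    ∃ P : Polynomial A, ∀ t, f t = P.eval (algebraMap k A t) := by
  induction hf using Submodule.span_induction with
  | mem f hf =>
    obtain ⟨i, a, rfl⟩ := hf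
    exact ⟨Polynomial.monomial i a, fun t => by simp [Algebra.smul_def, mul_comm]⟩
  | zero => exact ⟨0, by simp⟩
  | add g g' _ _ h h' =>
    obtain ⟨P, hP⟩ := h
    obtain ⟨Q, hQ⟩ := h'
    exact ⟨P + Q, fun t => by simp [hP, hQ]⟩
  | smul c g _ h =>
    obtain ⟨P, hP⟩ := h
    exact ⟨Polynomial.C (algebraMap k A c) * P, fun t => by simp [hP, Algebra.smul_def]⟩

lemma PF.mul_zero {A : Type*} [CommRing A] [Algebra k A] [IsReduced A] {f g : k → A}
    (hf : f ∈ PF k A) (hg : g ∈ PF k A) (h : ∀ t, f t * g t = 0) (s t : k) : f s * g t = 0 := by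
  obtain ⟨P, hP⟩ := PF.poly hf
  obtain ⟨Q, hQ⟩ := PF.poly hg
  have hPQ : P * Q = 0 := by
    ext i
    have := vanish (k := k) ((P * Q).natDegree + 1) (fun i => (P * Q).coeff i) (by
      intro t
      have := h t
      rw [hP, hQ, ← Polynomial.eval_mul, Polynomial.eval_eq_sum_range] at this
      rw [← this]
      refine sum_congr rfl fun i _ => ?_
      rw [Algebra.smul_def, map_pow, mul_comm])
    by_cases hi : i < (P * Q).natDegree + 1
    · simpa using this i hi
    · simpa using Polynomial.coeff_eq_zero_of_natDegree_lt (by omega)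
  have : f s * g t ∈ nilradical A := by
    rw [nilradical_eq_sInf, Ideal.mem_sInf]
    intro p hp
    have hp : p.IsPrime := hp
    have h2 := congrArg (Polynomial.map (Ideal.Quotient.mk p)) hPQ
    rw [Polynomial.map_mul, Polynomial.map_zero] at h2
    rw [← Ideal.Quotient.eq_zero_iff_mem, map_mul, hP, hQ, ← Polynomial.eval_map_apply, ← Polynomial.eval_map_apply]
    rcases mul_eq_zero.1 h2 with h | h <;> simp [h]
  simpa [nilradical_eq_zero] using this

lemma pow_zero_mono {M : Type*} [AddCommGroup M] [Module k M] (d : Module.End k M) {a : M} {i j : ℕ}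
    (h : (d ^ i) a = 0) (hij : i ≤ j) : (d ^ j) a = 0 := by
  obtain ⟨l, rfl⟩ := Nat.exists_eq_add_of_le' hij
  rw [pow_add, Module.End.mul_apply, h, map_zero]

lemma leib_kill {R : Type*} [Ring R] [Algebra k R] (d : Module.End k R)
    (hd : ∀ a b, d (a * b) = d a * b + a * d b) (n i j : ℕ) (a b : R)
    (ha : (d ^ i) a = 0) (hb : (d ^ j) b = 0) (hij : i + j ≤ n + 1) : (d ^ n) (a * b) = 0 := by
  rw [leib d hd]
  refine sum_eq_zero fun p hp => ?_
  have := mem_antidiagonal.1 hp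
  rcases le_or_gt i p.1 with h | h
  · rw [pow_zero_mono d ha h]; simp
  · rw [pow_zero_mono d hb (by omega : j ≤ p.2)]; simp

lemma leib_top {R : Type*} [Ring R] [Algebra k R] (d : Module.End k R)
    (hd : ∀ a b, d (a * b) = d a * b + a * d b) (i j : ℕ) (a b : R)
    (ha : (d ^ (i + 1)) a = 0) (hb : (d ^ (j + 1)) b = 0) :
    (d ^ (i + j)) (a * b) = (i + j).choose i • ((d ^ i) a * (d ^ j) b) := by
  rw [leib d hd]
  rw [sum_eq_single (i, j)]
  · rintro ⟨p, q⟩ hp hne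
    have := mem_antidiagonal.1 hp
    simp only at this ⊢
    rcases lt_trichotomy p i with h | h | h
    · rw [pow_zero_mono d hb (by omega : j + 1 ≤ q)]; simp
    · exact absurd (by ext <;> simp <;> omega) hne
    · rw [pow_zero_mono d ha (by omega : i + 1 ≤ p)]; simp
  · intro h; simp at h

lemma leib_sub {R : Type*} [Ring R] [Algebra k R] (d : Module.End k R)
    (hd : ∀ a b, d (a * b) = d a * b + a * d b) (m : ℕ) (a b : R)
    (ha : (d ^ (m + 2)) a = 0) (hb : (d ^ (m + 2)) b = 0) :
    (d ^ (2 * m + 1)) (a * b) =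
      (2 * m + 1).choose m • ((d ^ m) a * (d ^ (m + 1)) b + (d ^ (m + 1)) a * (d ^ m) b) := by
  rw [leib d hd]
  have hs : ({(m, m + 1), (m + 1, m)} : Finset (ℕ × ℕ)) ⊆ antidiagonal (2 * m + 1) := by
    intro x hx
    simp only [mem_insert, mem_singleton] at hx
    rcases hx with rfl | rfl <;> simp <;> omega
  rw [← sum_subset hs]
  · rw [sum_pair (by simp)]
    have : (2 * m + 1).choose (m + 1) = (2 * m + 1).choose m :=
      Nat.choose_symm_of_eq_add (by omega)
    simp only [this, nsmul_add]
  · rintro ⟨p, q⟩ hp hne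
    have := mem_antidiagonal.1 hp
    simp only [mem_insert, mem_singleton, Prod.mk.injEq] at this hne ⊢
    rcases lt_or_ge p m with h | h
    · rw [pow_zero_mono d hb (by omega : m + 2 ≤ q)]; simp
    · rw [pow_zero_mono d ha (by omega : m + 2 ≤ p)]; simp

variable {A : Type*} [CommRing A] [Algebra k A]

variable (k) in
/-- multiplication -/
def ml : A →ₗ[k] Module.End k A := LinearMap.mul k A

variable (k) in
/-- linear version of delta -/
def dl : A →ₗ[k] Module.End k (Module.End k A) :=
  LinearMap.mk₂ k (fun u D => D * ml k u - ml k u * D)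
    (fun _ _ _ => by simp only [map_add, mul_add, add_mul]; abel)
    (fun _ _ _ => by simp only [map_smul, mul_smul_comm, smul_mul_assoc, smul_sub])
    (fun _ _ _ => by simp only [mul_add, add_mul]; abel)
    (fun _ _ _ => by simp only [mul_smul_comm, smul_mul_assoc, smul_sub])

lemma ml_apply (a b : A) : ml k a b = a * b := rfl

lemma dl_def (u : A) (D : Module.End k A) : dl k u D = D * ml k u - ml k u * D := rfl

lemma dl_apply (u : A) (D : Module.End k A) (y : A) : dl k u D y = D (u * y) - u * D y := rfl

lemma dl_mul (u : A) (D E : Module.End k A) : dl k u (D * E) = dl k u D * E + D * dl k u E := by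
  simp only [dl_def]; simp only [sub_mul, mul_sub, mul_assoc]; abel

lemma dl_ml (u a : A) : dl k u (ml k a) = 0 := by
  ext y; simp [dl_apply, ml_apply]; ring

lemma dl_comm (u v : A) : Commute (dl k u) (dl k v) := by
  refine LinearMap.ext fun D => LinearMap.ext fun y => ?_
  simp only [Module.End.mul_apply, dl_apply]
  rw [show v * (u * y) = u * (v * y) by ring]
  ring

lemma dl_pow_ml_mul (u a : A) (n : ℕ) (D : Module.End k A) :
    (dl k u ^ n) (ml k a * D) = ml k a * (dl k u ^ n) D := by
  induction n with
  | zero => simp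
  | succ n ih => rw [pow_succ', Module.End.mul_apply, ih, dl_mul, dl_ml, zero_mul, zero_add]; rfl

/-- order less than r -/
def Ord (r : ℕ) (D : Module.End k A) : Prop := ∀ u, (dl k u ^ r) D = 0

lemma Ord.dl {r : ℕ} {D : Module.End k A} (h : Ord (r + 1) D) (v : A) : Ord r (dl k v D) := by
  intro u
  have := pol (k := k) (LinearMap.applyₗ D) (LD.dl k u) (LD.dl k v) (dl_comm u v) (r + 1) (by
    intro t
    have := h (t • u + v)
    simpa using this) r 1 rfl
  simpa using this

lemma Ord.mono {r s : ℕ} {D : Module.End k A} (h : Ord r D) (hrs : r ≤ s) : Ord s D :=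
  fun u => pow_zero_mono _ (h u) hrs

lemma Ord.pow {r i j : ℕ} {D : Module.End k A} (h : Ord r D) (u : A) (hr : r = i + j) :
    Ord i ((LD.dl k u ^ j) D) := by
  subst hr
  induction j generalizing D with
  | zero => simpa using h
  | succ j ih => rw [pow_succ, Module.End.mul_apply]; exact ih (h.dl u)

lemma Ord.const {D : Module.End k A} (h : Ord 1 D) : D = ml k (D 1) := by
  ext y
  have := congrArg (fun E : Module.End k A => E 1) (h y)
  simp only [pow_one, dl_apply, mul_one, LinearMap.zero_apply] at this
  rw [ml_apply, mul_comm]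
  exact sub_eq_zero.1 this

lemma ord_iff (n : ℕ) (D : Module.End k A) : IsDiffOpLE n (fun y => D y) ↔ Ord (n + 1) D := by
  induction n generalizing D with
  | zero =>
    constructor
    · intro h u
      ext y
      exact congrFun (h u) y
    · intro h u
      ext y
      exact congrArg (fun E : Module.End k A => E y) (h u)
  | succ n ih =>
    constructor
    · intro h u
      have := (ih (dl k u D)).1 (h u) u
      rwa [pow_succ, Module.End.mul_apply]
    · intro h u
      exact (ih (dl k u D)).2 (h.dl u)

lemma Ord.sub {r : ℕ} {D E : Module.End k A} (h : Ord r D) (h' : Ord r E) : Ord r (D - E) := by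
  intro u; rw [map_sub, h u, h' u, sub_zero]

lemma Ord.ml_mul {r : ℕ} {D : Module.End k A} (h : Ord r D) (a : A) : Ord r (ml k a * D) := by
  intro u; rw [dl_pow_ml_mul, h u, mul_zero]

/-- evaluation -/
def Ph (ad : A →ₗ[k] Module.End k A) (c : A) :
    Module.End k (Module.End k A) →ₗ[k] Module.End k A where
  toFun F := LinearMap.applyₗ c ∘ₗ F ∘ₗ ad
  map_add' _ _ := by ext; simp
  map_smul' _ _ := by ext; simp

lemma Ph_apply (ad : A →ₗ[k] Module.End k A) (c : A) (F) (y : A) : Ph ad c F y = F (ad y) c := rfl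

lemma Ph_ord (ad : A →ₗ[k] Module.End k A) (N : ℕ) (h : ∀ c, Ord N (ad.flip c)) (u : A) (m : ℕ) :
    ∀ c, Ord N (Ph ad c (dl k u ^ m)) := by
  induction m with
  | zero => exact h
  | succ m ih =>
    intro c
    have : Ph ad c (dl k u ^ (m + 1)) =
        Ph ad (u * c) (dl k u ^ m) - ml k u * Ph ad c (dl k u ^ m) := by
      ext y
      rw [pow_succ', Ph_apply, Module.End.mul_apply, dl_apply]; rfl
    rw [this]
    exact (ih _).sub ((ih _).ml_mul _)

lemma PF.line {M : Type*} [AddCommGroup M] [Module k M] (a b : M) :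
    (fun t : k => a + t • b) ∈ PF k M :=
  (PF k M).add_mem (PF.const a) (by simpa using PF.mono (k := k) 1 b)

lemma PF.line_pow {M : Type*} [Ring M] [Algebra k M] (a b : M) (r : ℕ) :
    (fun t : k => (a + t • b) ^ r) ∈ PF k M :=
  PF.pow (PF.line a b) r

lemma PF.line_pow_app {M N : Type*} [Ring M] [Algebra k M] [AddCommGroup N] [Module k N]
    (Φ : M →ₗ[k] N) (a b : M) (r : ℕ) :
    (fun t : k => Φ ((a + t • b) ^ r)) ∈ PF k N :=
  PF.map Φ (PF.line_pow a b r)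

lemma pf_aux (w v : A) (r : ℕ) (D : Module.End k A) :
    (fun t : k => ((dl k (w + t • v) ^ r) D) 1) ∈ PF k A := by
  have h := PF.line_pow_app (k := k) ((LinearMap.applyₗ (1 : A)) ∘ₗ (LinearMap.applyₗ D))
    (dl k w) (dl k v) r
  simp only [← map_smul, ← map_add] at h
  exact h

variable [IsReduced A]

lemma mul_self_eq_zero_of_red {c : A} (h : c * c = 0) : c = 0 :=
  pow_eq_zero_iff (n := 2) (by norm_num) |>.1 (by rw [sq, h])

lemma step_r (ad : A →ₗ[k] Module.End k A) (hj : ∀ x y, ad x * ad y - ad y * ad x = ad (ad x y))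
    (m : ℕ) (hm : 1 ≤ m) (hq : ∀ x, Ord (m + 2) (ad x)) (r : ℕ)
    (hr : ∀ u, Ord (r + 1) (Ph ad 1 (dl k u ^ (m + 1)))) (u : A) :
    Ord r (Ph ad 1 (dl k u ^ (m + 1))) := by
  -- the basic identity
  have key : ∀ u x y, dl k (Ph ad 1 (dl k u ^ (m + 1)) y) ((dl k u ^ m) (ad x)) =
      dl k (Ph ad 1 (dl k u ^ (m + 1)) x) ((dl k u ^ m) (ad y)) := by
    intro u x y
    have h1 := congrArg (dl k u ^ (2 * m + 1)) (hj x y)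
    rw [pow_zero_mono _ (hq _ u) (by omega : m + 2 ≤ 2 * m + 1), map_sub,
      leib_sub _ (dl_mul u) m _ _ (hq x u) (hq y u), leib_sub _ (dl_mul u) m _ _ (hq y u) (hq x u),
      ← nsmul_sub] at h1
    have h2 := nsmul_zero k (Nat.choose_pos (by omega)).ne' h1
    have hx := ((hq x).pow u (by omega : m + 2 = 1 + (m + 1))).const
    have hy := ((hq y).pow u (by omega : m + 2 = 1 + (m + 1))).const
    rw [dl_def, dl_def, Ph_apply, Ph_apply, ← hx, ← hy, ← sub_eq_zero, ← h2]
    abel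
  -- top symbol in the first argument
  have key2 : ∀ x u w, (dl k w ((dl k u ^ m) (ad x))) 1 *
      ((dl k w ^ r) (Ph ad 1 (dl k u ^ (m + 1)))) 1 = 0 := by
    intro x u w
    set S := Ph ad 1 (dl k u ^ (m + 1)) with hS
    set X := (dl k u ^ m) (ad x) with hX
    have hXo : Ord 2 X := (hq x).pow u (by omega)
    set D := X - ml k (X 1) with hD
    have hDw : dl k w D = dl k w X := by rw [hD, map_sub, dl_ml, sub_zero]
    have hcomp : D * S = Ph ad 1 ((dl k u) ^ m * (dl k (S x)) ^ 1) := by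
      ext y
      have := congrArg (fun E : Module.End k A => E 1) (key u x y)
      simp only [← hS, ← hX] at this
      rw [Ph_apply, pow_one, ((dl_comm u (S x)).pow_left m).eq, Module.End.mul_apply, Module.End.mul_apply, ← this,
        dl_apply, hD, LinearMap.sub_apply, ml_apply, mul_one, mul_comm (X 1)]
    have h0 : (dl k w ^ (r + 1)) (D * S) = 0 := by
      rw [hcomp]
      refine pol (k := k) ((dl k w ^ (r + 1)) ∘ₗ Ph ad 1) (dl k u) (dl k (S x)) (dl_comm _ _) (m + 1)
        ?_ m 1 rfl
      intro t
      have := hr (t • u + S x) w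
      simpa using this
    have hD2 : (dl k w ^ (1 + 1)) D = 0 := by
      rw [pow_succ, Module.End.mul_apply, hDw]
      have := hXo w
      rwa [pow_succ, Module.End.mul_apply] at this
    rw [add_comm r 1, leib_top _ (dl_mul w) 1 r D S hD2 (hr u w)] at h0
    have h2 := nsmul_zero k (Nat.choose_pos (by omega)).ne' h0
    rw [pow_one, hDw, (hXo.dl w).const] at h2
    have := congrArg (fun E : Module.End k A => E 1) h2
    simpa [ml_apply] using this
  -- separate the variables
  have key3 : ∀ x u w, (Ph ad 1 (dl k u ^ (m + 1))) x *
      ((dl k w ^ r) (Ph ad 1 (dl k u ^ (m + 1)))) 1 = 0 := by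
    intro x u w
    have hf := pf_aux (w) (u - w) 1 ((dl k u ^ m) (ad x))
    have hg := pf_aux (w) (u - w) r (Ph ad 1 (dl k u ^ (m + 1)))
    have := PF.mul_zero hf hg (fun t => by
      rw [pow_one]; exact key2 x u _) 1 0
    simp only [pow_one, one_smul, zero_smul, add_zero, add_sub_cancel] at this
    rwa [Ph_apply, pow_succ', Module.End.mul_apply, ← pow_succ']
  intro w
  set S := Ph ad 1 (dl k u ^ (m + 1)) with hS
  have hc := ((hr u).pow w (by omega : r + 1 = 1 + r)).const
  set c := ((dl k w ^ r) S) 1 with hcd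
  have h0 : ml k c * S = 0 := by
    ext x
    rw [Module.End.mul_apply, ml_apply, mul_comm]; exact key3 x u w
  have h1 := dl_pow_ml_mul w c r S
  rw [h0, map_zero] at h1
  have h2 := congrArg (fun E : Module.End k A => E 1) h1
  simp only [LinearMap.zero_apply, Module.End.mul_apply, ml_apply, ← hcd] at h2
  have : c = 0 := mul_self_eq_zero_of_red h2.symm
  rw [hc, this, map_zero]

lemma step_q (ad : A →ₗ[k] Module.End k A) (hj : ∀ x y, ad x * ad y - ad y * ad x = ad (ad x y))
    (N : ℕ) (hN : ∀ c, Ord N (ad.flip c))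
    (m : ℕ) (hm : 1 ≤ m) (hq : ∀ x, Ord (m + 2) (ad x)) (x : A) : Ord (m + 1) (ad x) := by
  have h : ∀ r ≤ N, ∀ u, Ord (N - r) (Ph ad 1 (dl k u ^ (m + 1))) := by
    intro r
    induction r with
    | zero => exact fun _ u => Ph_ord ad N hN u _ 1
    | succ r ih =>
      intro hr u
      refine step_r ad hj m hm hq _ (fun u => ?_) u
      rw [show N - (r + 1) + 1 = N - r by omega]
      exact ih (by omega) u
  intro u
  have h0 := h N le_rfl u 0
  rw [Nat.sub_self, pow_zero, Module.End.one_apply] at h0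
  rw [((hq x).pow u (by omega : m + 2 = 1 + (m + 1))).const, ← Ph_apply, h0]
  simp

lemma right_ord (ad : A →ₗ[k] Module.End k A) (hj : ∀ x y, ad x * ad y - ad y * ad x = ad (ad x y))
    (N : ℕ) (hN : ∀ c, Ord N (ad.flip c)) (m : ℕ) (hq : ∀ x, Ord (m + 2) (ad x)) (x : A) :
    Ord 2 (ad x) := by
  induction m with
  | zero => exact hq x
  | succ m ih => exact ih (step_q ad hj N hN (m + 1) (by omega) hq)

lemma left_ord (ad : A →ₗ[k] Module.End k A) (hj : ∀ x y, ad x * ad y - ad y * ad x = ad (ad x y))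
    (hr : ∀ x, Ord 2 (ad x)) (m : ℕ) (hq : ∀ x, Ord (m + 2) (ad.flip x)) (y : A) :
    Ord 2 (ad.flip y) := by
  induction m with
  | zero => exact hq y
  | succ m ih =>
    refine ih fun y u => ?_
    have e : ad.flip y * ad.flip y = ad.flip (ad y y) - ad y * ad.flip y := by
      ext x
      have := congrArg (fun E : Module.End k A => E y) (hj x y)
      simp only [LinearMap.sub_apply, Module.End.mul_apply, LinearMap.flip_apply] at this ⊢
      exact this.symm
    have h1 := congrArg (dl k u ^ ((m + 2) + (m + 2))) e
    rw [leib_top _ (dl_mul u) _ _ _ _ (hq y u) (hq y u), map_sub,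
      pow_zero_mono _ (hq _ u) (by omega : m + 1 + 2 ≤ m + 2 + (m + 2)),
      leib_kill _ (dl_mul u) _ 2 (m + 1 + 2) _ _ (hr y u) (hq y u) (by omega), sub_zero] at h1
    have h2 := nsmul_zero k (Nat.choose_pos (by omega : m + 2 ≤ m + 2 + (m + 2))).ne' h1
    have hc := ((hq y).pow u (by omega : m + 1 + 2 = 1 + (m + 2))).const
    rw [hc] at h2 ⊢
    have h3 := congrArg (fun E : Module.End k A => E 1) h2
    simp only [Module.End.mul_apply, ml_apply, LinearMap.zero_apply, mul_one] at h3
    rw [mul_self_eq_zero_of_red h3, map_zero]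

end
end LD

/-- **Proposition 2.** On a reduced commutative unital algebra over a field of
characteristic zero, every bidifferential Loday bracket is of order `≤ 1` in
each argument: `δ(u)δ(v)` applied to `B(x,·)` and to `B(·,x)` vanishes. -/
theorem differential_loday_bracket_order_le_one
    {k : Type*} [Field k] [CharZero k]
    {A : Type*} [CommRing A] [Algebra k A] [IsReduced A]
    (B : A → A → A)
    (haddl : ∀ a b c : A, B (a + b) c = B a c + B b c)
    (haddr : ∀ a b c : A, B a (b + c) = B a b + B a c)
    (hsmull : ∀ (t : k) (a b : A), B (t • a) b = t • B a b)
    (hsmulr : ∀ (t : k) (a b : A), B a (t • b) = t • B a b)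
    (n : ℕ)
    (horder : ∀ x : A, IsDiffOpLE n (fun y => B x y) ∧ IsDiffOpLE n (fun y => B y x))
    (hjacobi : ∀ x y z : A, B x (B y z) = B (B x y) z + B y (B x z)) :
    ∀ u v x : A,
      delta u (delta v (fun y => B x y)) = 0 ∧
      delta u (delta v (fun y => B y x)) = 0 := by
  let ad : A →ₗ[k] Module.End k A := LinearMap.mk₂ k B haddl hsmull haddr hsmulr
  have hj : ∀ x y, ad x * ad y - ad y * ad x = ad (ad x y) := by
    intro x y
    ext z
    exact sub_eq_of_eq_add (hjacobi x y z)
  have hR : ∀ x, LD.Ord (n + 1) (ad x) := fun x => (LD.ord_iff n (ad x)).1 (horder x).1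
  have hL : ∀ x, LD.Ord (n + 1) (ad.flip x) := fun x => (LD.ord_iff n (ad.flip x)).1 (horder x).2
  have hR2 := LD.right_ord ad hj (n + 1) hL n (fun x => (hR x).mono (by omega))
  have hL2 := LD.left_ord ad hj hR2 n (fun x => (hL x).mono (by omega))
  intro u v x
  exact ⟨(LD.ord_iff 1 (ad x)).2 (hR2 x) v u, (LD.ord_iff 1 (ad.flip x)).2 (hL2 x) v u⟩
end

section
/- Let k be a field of characteristic zero and A a commutative unital k-algebra with no nonzero nilpotent elements. Let B : A × A → A be a k-bilinear bracket of differential order ≤ 1 in each argument satisfying the Loday Jacobi identity B(x,B(y,z)) = B(B(x,y),z) + B(y,B(x,z)). Then B(z, B(x,x)) = 0 for all x, z ∈ A. -/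
/-- For a first-order Loday bracket on a reduced commutative unital algebra
over a field of characteristic zero, `B(z, B(x,x)) = 0`. -/
theorem first_order_loday_bracket_square_right_zero
    {k : Type*} [Field k] [CharZero k]
    {A : Type*} [CommRing A] [Algebra k A] [IsReduced A]
    (B : A → A → A)
    (haddl : ∀ a b c : A, B (a + b) c = B a c + B b c)
    (haddr : ∀ a b c : A, B a (b + c) = B a b + B a c)
    (hsmull : ∀ (t : k) (a b : A), B (t • a) b = t • B a b)
    (hsmulr : ∀ (t : k) (a b : A), B a (t • b) = t • B a b)
    (horder : ∀ u v x : A,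
      delta u (delta v (fun y => B x y)) = 0 ∧
      delta u (delta v (fun y => B y x)) = 0)
    (hjacobi : ∀ x y z : A, B x (B y z) = B (B x y) z + B y (B x z)) :
    ∀ x z : A, B z (B x x) = 0 := by
  have h2 : ∀ a : A, a + a = 0 → a = 0 := by
    intro a ha
    have h : (2 : k) • a = 0 := by rw [two_smul]; exact ha
    exact (smul_eq_zero.mp h).resolve_left two_ne_zero
  have sq0 : ∀ a : A, a * a = 0 → a = 0 := by
    intro a ha
    exact IsReduced.eq_zero a ⟨2, by rw [pow_two]; exact ha⟩
  have hr : ∀ x u v : A, B x (u * v) = u * B x v + v * B x u - u * v * B x 1 := by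
    intro x u v
    have h := congrFun (horder u v x).1 1
    simp only [delta, mul_one, Pi.zero_apply] at h
    rw [mul_comm v u] at h
    linear_combination h
  have hl : ∀ x u v : A, B (u * v) x = u * B v x + v * B u x - u * v * B 1 x := by
    intro x u v
    have h := congrFun (horder u v x).2 1
    simp only [delta, mul_one, Pi.zero_apply] at h
    rw [mul_comm v u] at h
    linear_combination h
  have I1 : ∀ x y z : A, B (B x y + B y x) z = 0 := by
    intro x y z
    rw [haddl]
    linear_combination -hjacobi x y z - hjacobi y x z
  obtain ⟨c, hc⟩ : ∃ c, c = B 1 1 := ⟨_, rfl⟩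
  obtain ⟨E, hE⟩ : ∃ E : A → A, ∀ x, E x = B x 1 - c * x := ⟨_, fun _ => rfl⟩
  obtain ⟨D, hD⟩ : ∃ D : A → A, ∀ x, D x = B 1 x - c * x := ⟨_, fun _ => rfl⟩
  obtain ⟨L, hL⟩ : ∃ L : A → A → A, ∀ x y, L x y = B x y - x * D y - E x * y - c * x * y :=
    ⟨_, fun _ _ => rfl⟩
  have hB : ∀ x y, B x y = L x y + x * D y + E x * y + c * x * y := by
    intro x y; rw [hL]; ring
  have Emul : ∀ x y, E (x * y) = x * E y + y * E x := by
    intro x y; rw [hE, hE, hE, hl, ← hc]; ring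
  have Eadd : ∀ x y, E (x + y) = E x + E y := by
    intro x y; rw [hE, hE, hE, haddl]; ring
  have Dadd : ∀ x y, D (x + y) = D x + D y := by
    intro x y; rw [hD, hD, hD, haddr]; ring
  have L1 : ∀ x, L x 1 = 0 := by
    intro x; rw [hL, hD, hE, ← hc]; ring
  have L1' : ∀ x, L 1 x = 0 := by
    intro x; rw [hL, hD, hE, ← hc]; ring
  have E1 : E 1 = 0 := by rw [hE, ← hc]; ring
  have D1 : D 1 = 0 := by rw [hD, ← hc]; ring
  have Laddl : ∀ x y z, L (x + y) z = L x z + L y z := by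
    intro x y z; rw [hL, hL, hL, haddl, Eadd]; ring
  -- elements of the left kernel
  have w1 : ∀ w, (∀ z, B w z = 0) → E w + c * w = 0 := by
    intro w hw; rw [hE, hw]; ring
  have w2 : ∀ w, (∀ z, B w z = 0) → ∀ f z, B (w * f) z = w * (L f z + E f * z) := by
    intro w hw f z
    rw [hl, hw, hB f z, hB 1 z, L1', E1]; ring
  have key : ∀ x f y z, (L x y + L y x + (E x + D x) * y) * (L f z + E f * z)
      + (L f y + L y f + (E f + D f) * y) * (L x z + E x * z) = 0 := by
    intro x f y z
    have e : B (x * f) y + B y (x * f) + (B 1 y + B y 1) * (x * f)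
        = (B x y + B y x) * f + (B f y + B y f) * x := by
      rw [hl y x f, hr y x f]; ring
    have e2 := congrArg (fun t => B t z) e
    simp only [haddl _ _ z] at e2
    rw [← haddl (B (x*f) y), I1, w2 _ (I1 x y), w2 _ (I1 f y), w2 _ (I1 1 y)] at e2
    have e3 : L (x * f) z + E (x * f) * z = x * (L f z + E f * z) + f * (L x z + E x * z) := by
      rw [hL, hL, hL, hl, Emul, hB 1 z, L1', E1]; ring
    rw [e3, hB x y, hB y x, hB f y, hB y f, hB 1 y, hB y 1, L1, L1', E1, D1] at e2
    linear_combination -e2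
  have FE : ∀ x f, (E x + D x) * E f + (E f + D f) * E x = 0 := by
    intro x f
    have h := key x f 1 1
    simp only [L1, L1'] at h
    linear_combination h
  have FEx : ∀ x, (E x + D x) * E x = 0 := fun x => h2 _ (FE x x)
  have FE0 : ∀ x f, (E x + D x) * E f = 0 := by
    intro x f
    apply sq0
    linear_combination (E x + D x) * E f * FE x f - (E f + D f) * E f * FEx x
  have FL : ∀ x f z, (E x + D x) * L f z + (E f + D f) * L x z = 0 := by
    intro x f z
    have h := key x f 1 z
    simp only [L1, L1'] at h
    linear_combination h - z * FE x f
  have FLx : ∀ x z, (E x + D x) * L x z = 0 := fun x z => h2 _ (FL x x z)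
  have FL0 : ∀ x f z, (E x + D x) * L f z = 0 := by
    intro x f z
    apply sq0
    linear_combination (E x + D x) * L f z * FL x f z - (E f + D f) * L f z * FLx x z
  have Lxx : ∀ x, L x x = 0 := by
    intro x
    have hh := key x x x x
    have ha := key x x x 1
    simp only [L1, L1'] at ha
    apply sq0
    apply h2
    apply h2
    linear_combination hh - x * ha - 2 * x * FLx x x
  have cI : ∀ z, B c z = 0 := by
    intro z
    apply h2
    rw [← haddl, hc]; exact I1 1 1 z
  have Fc : ∀ t, (E t + D t) * c = 0 := by
    intro t
    apply sq0
    linear_combination (E t + D t) * (E t + D t) * w1 c cI - (E t + D t) * FE0 t c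
  have F0 : ∀ x, E x + D x = 0 := by
    intro x
    have h := I1 x 1 x
    have e : B x 1 + B 1 x = (E x + D x) + (c * x + c * x) := by
      rw [hE, hD]; ring
    rw [hB, e] at h
    refine IsReduced.eq_zero _ ⟨3, ?_⟩
    linear_combination (E x + D x) * h - FL0 x (E x + D x + (c * x + c * x)) x
      - x * FE0 x (E x + D x + (c * x + c * x))
      - (2 * x * D x + x * (E x + D x + (c * x + c * x))) * Fc x
      + (E x + D x) * FE0 x x
  have cxI : ∀ x z, B (c * x) z = 0 := by
    intro x z
    apply h2
    have e : B x 1 + B 1 x = (E x + D x) + (c * x + c * x) := by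
      rw [hE, hD]; ring
    rw [← haddl]
    have h := I1 x 1 z
    rwa [e, F0, zero_add] at h
  have cE : ∀ x, c * E x = 0 := by
    intro x
    have h := w1 _ (cxI x)
    rw [Emul] at h
    linear_combination h - x * w1 c cI
  have c0 : c = 0 := by
    refine IsReduced.eq_zero _ ⟨3, ?_⟩
    linear_combination c * w1 c cI - cE c
  intro x z
  have hxx : B x x = 0 := by
    rw [hB, Lxx, c0]
    linear_combination x * F0 x
  rw [hxx]
  have h := hsmulr 0 z 0
  rwa [zero_smul, zero_smul] at h
end

section
/- Let k be a field of characteristic zero and A a commutative unital k-algebra with no nonzero nilpotent elements. Let B : A × A → A be a k-bilinear bracket of differential order ≤ 1 in each argument satisfying the Loday Jacobi identity B(x,B(y,z)) = B(B(x,y),z) + B(y,B(x,z)). Then B is skew-symmetric: B(x,y) = −B(y,x) for all x, y ∈ A. -/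
/-- A first-order Loday bracket on a reduced commutative unital algebra over a
field of characteristic zero is skew-symmetric. -/
theorem first_order_loday_bracket_skew_symmetric
    {k : Type*} [Field k] [CharZero k]
    {A : Type*} [CommRing A] [Algebra k A] [IsReduced A]
    (B : A → A → A)
    (haddl : ∀ a b c : A, B (a + b) c = B a c + B b c)
    (haddr : ∀ a b c : A, B a (b + c) = B a b + B a c)
    (hsmull : ∀ (t : k) (a b : A), B (t • a) b = t • B a b)
    (hsmulr : ∀ (t : k) (a b : A), B a (t • b) = t • B a b)
    (horder : ∀ u v x : A,
      delta u (delta v (fun y => B x y)) = 0 ∧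
      delta u (delta v (fun y => B y x)) = 0)
    (hjacobi : ∀ x y z : A, B x (B y z) = B (B x y) z + B y (B x z)) :
    ∀ x y : A, B x y = - B y x := by
  have hR : ∀ x y z : A, B x (y * z) = y * B x z + z * B x y - y * z * B x 1 := by
    intro x y z
    have h := congrFun (horder z y x).1 1
    simp only [delta, Pi.zero_apply, mul_one] at h
    linear_combination h
  have hL : ∀ x y z : A, B (y * z) x = y * B z x + z * B y x - y * z * B 1 x := by
    intro x y z
    have h := congrFun (horder z y x).2 1
    simp only [delta, Pi.zero_apply, mul_one] at h
    linear_combination h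
  have h0l : ∀ z : A, B 0 z = 0 := by
    intro z
    have h := haddl 0 0 z
    rw [add_zero] at h
    linear_combination -h
  have hnegl : ∀ x z : A, B (-x) z = - B x z := by
    intro x z
    have h := haddl x (-x) z
    rw [add_neg_cancel, h0l] at h
    linear_combination -h
  have htwo : ∀ x : A, x + x = 0 → x = 0 := by
    intro x h
    have h2 : (2 : k) • x = 0 := by rw [two_smul, h]
    exact (smul_eq_zero.mp h2).resolve_left two_ne_zero
  have hsq : ∀ x : A, x * x = 0 → x = 0 := by
    intro x h
    exact (IsReduced.pow_eq_zero_iff (n := 2) two_ne_zero).mp (by rw [sq, h])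
  have hN : ∀ x y z : A, B (B x y + B y x) z = 0 := by
    intro x y z
    rw [haddl]
    linear_combination -(hjacobi x y z) - hjacobi y x z
  -- derivation parts
  obtain ⟨S, hS⟩ : ∃ S : A → A → A, ∀ x y, S x y = B x y + B y x := ⟨_, fun _ _ => rfl⟩
  have hNS : ∀ x y z : A, B (S x y) z = 0 := by
    intro x y z
    rw [hS, hN]
  have hSm : ∀ x y w : A, S x (y * w) = y * S x w + w * S x y + -(y * w * S x 1) := by
    intro x y w
    simp only [hS]
    rw [hR, hL]
    ring
  obtain ⟨T, hT⟩ : ∃ T : A → A → A, ∀ x y, T x y = S x y - y * S x 1 := ⟨_, fun _ _ => rfl⟩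
  obtain ⟨L, hLd⟩ : ∃ L : A → A → A, ∀ x y, L x y = B x y - x * B 1 y := ⟨_, fun _ _ => rfl⟩
  have h1 : ∀ x y w z : A, T x w * L y z + T x y * L w z = 0 := by
    intro x y w z
    have h := hNS x (y * w) z
    rw [hSm, haddl, haddl, hnegl, hL, hL, hL z (y * w), hL z y w, hNS, hNS, hNS] at h
    rw [hT, hT, hLd, hLd]
    linear_combination h
  have h2 : ∀ x w y z : A, T x w * L y z = 0 := by
    intro x w y z
    have e : T x w * L w z = 0 := htwo _ (h1 x w w z)
    apply hsq
    linear_combination (T x w * L y z) * h1 x y w z - T x y * L y z * e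
  have hP : ∀ x y : A, T x y - x * T 1 y = 0 := by
    intro x y
    apply hsq
    have e : T x y - x * T 1 y = (L x y - y * L x 1) + (L y x - x * L y 1) := by
      simp only [hT, hLd, hS]; ring
    have e2 : ∀ u v, (T x y - x * T 1 y) * L u v = 0 := by
      intro u v
      linear_combination h2 x y u v - x * h2 1 y u v
    linear_combination (T x y - x * T 1 y) * e + e2 x y - y * e2 x 1 + e2 y x - x * e2 y 1
  have hcN : ∀ z, B (B 1 1) z = 0 := by
    intro z
    have h := hN 1 1 z
    rw [haddl] at h
    exact htwo _ h
  -- for n in the left kernel, n * s x * s y = 0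
  have hn : ∀ n : A, (∀ z, B n z = 0) → ∀ x y, n * T 1 x * T 1 y = 0 := by
    intro n hn x y
    have e1 := h2 1 x n y
    have e2 := h2 1 x n 1
    have e3 := h2 1 x y 1
    rw [hLd, hn] at e1 e2
    rw [hLd] at e3
    have e4 : T 1 y = (B 1 y - y * B 1 1) + (B y 1 - y * B 1 1) := by
      simp only [hT, hS]; ring
    linear_combination n * T 1 x * e4 - e1 + y * e2 + n * e3
  have hcs : ∀ x, B 1 1 * T 1 x = 0 := by
    intro x
    apply hsq
    linear_combination B 1 1 * hn _ hcN x x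
  have hs : ∀ x, T 1 x = 0 := by
    intro x
    have e := hn _ (hNS 1 x) x x
    have e4 : S 1 x = T 1 x + 2 * x * B 1 1 := by
      simp only [hT, hS]; ring
    have e5 : T 1 x ^ 3 = 0 := by
      rw [e4] at e
      linear_combination e - 2 * x * T 1 x * hcs x
    exact (IsReduced.pow_eq_zero_iff (n := 3) (by norm_num)).mp e5
  have hc : B 1 1 = 0 := by
    have e4 : S 1 (B 1 1) = B 1 1 * B 1 1 + B 1 1 * B 1 1 := by
      have := hs (B 1 1)
      rw [hT, hS 1 1] at this
      linear_combination this
    have e5 := hNS 1 (B 1 1) 1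
    rw [e4, haddl] at e5
    have e6 := htwo _ e5
    rw [hL, hcN] at e6
    exact (IsReduced.pow_eq_zero_iff (n := 3) (by norm_num)).mp
      (by linear_combination -e6)
  intro x y
  have p := hP x y
  have q := hs x
  have r := hs y
  have f : S x 1 = S 1 x := by rw [hS, hS]; ring
  rw [hT, hS 1 1, hc] at q
  rw [r, hT, f, hS] at p
  linear_combination p + y * q
end

section
/- Let k be a field of characteristic zero and A a commutative unital k-algebra with no nonzero nilpotent elements. Let B : A × A → A be a k-bilinear bracket which is a bidifferential operator of some order n and satisfies the Loday Jacobi identity B(x,B(y,z)) = B(B(x,y),z) + B(y,B(x,z)). Then there exist a k-derivation Γ : A → A and a k-bilinear map Λ : A × A → A which is skew-symmetric and a derivation in each argument, such that B(x,y) = Λ(x,y) + x·Γ(y) − y·Γ(x) for all x, y ∈ A. -/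
open Polynomial in
def LPoly (k : Type*) {V R : Type*} [Field k] [AddCommGroup V] [Module k V] [CommRing R] [Algebra k R]
    (f : V → R) : Prop :=
  ∀ v w : V, ∃ U : R[X], ∀ t : k, f (v + t • w) = U.eval (algebraMap k R t)

namespace LPoly
variable {k V W R : Type*} [Field k] [AddCommGroup V] [Module k V] [AddCommGroup W] [Module k W]
  [CommRing R] [Algebra k R]

theorem mul {f g : V → R} (hf : LPoly k f) (hg : LPoly k g) : LPoly k (fun v => f v * g v) := by
  intro v w
  obtain ⟨U, hU⟩ := hf v w
  obtain ⟨U', hU'⟩ := hg v w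
  exact ⟨U * U', fun t => by simp [hU, hU']⟩

theorem add {f g : V → R} (hf : LPoly k f) (hg : LPoly k g) : LPoly k (fun v => f v + g v) := by
  intro v w
  obtain ⟨U, hU⟩ := hf v w
  obtain ⟨U', hU'⟩ := hg v w
  exact ⟨U + U', fun t => by simp [hU, hU']⟩

theorem sub {f g : V → R} (hf : LPoly k f) (hg : LPoly k g) : LPoly k (fun v => f v - g v) := by
  intro v w
  obtain ⟨U, hU⟩ := hf v w
  obtain ⟨U', hU'⟩ := hg v w
  exact ⟨U - U', fun t => by simp [hU, hU']⟩

theorem comp {f : V → R} (hf : LPoly k f) (l : W →ₗ[k] V) : LPoly k (fun v => f (l v)) := by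
  intro v w
  obtain ⟨U, hU⟩ := hf (l v) (l w)
  exact ⟨U, fun t => by simp [← hU]⟩

theorem poly_zero [CharZero k] [IsDomain R] (U : Polynomial R)
    (h : ∀ n : ℕ, U.eval (algebraMap k R n) = 0) : U = 0 := by
  apply Polynomial.eq_zero_of_infinite_isRoot
  apply Set.infinite_of_injective_forall_mem (f := fun n : ℕ => algebraMap k R n)
  · intro a b hab
    have := (algebraMap k R).injective hab
    exact_mod_cast this
  · intro n
    exact h n

theorem mul_zero [CharZero k] [IsDomain R] {f g : V → R} (hf : LPoly k f) (hg : LPoly k g)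
    (h : ∀ v, f v * g v = 0) : (∀ v, f v = 0) ∨ (∀ v, g v = 0) := by
  by_contra! hc
  obtain ⟨⟨v, hv⟩, ⟨w, hw⟩⟩ := hc
  obtain ⟨U, hU⟩ := hf v (w - v)
  obtain ⟨U', hU'⟩ := hg v (w - v)
  have h0 : U * U' = 0 := by
    apply poly_zero (k := k)
    intro n
    rw [Polynomial.eval_mul, ← hU, ← hU', h]
  rcases mul_eq_zero.1 h0 with h1 | h1
  · have := hU 0
    simp [h1] at this
    exact hv this
  · have := hU' 1
    simp [h1] at this
    exact hw this

/-- A pencil of the form `v ↦ (a v.1 + b v.2, c v.1 + d v.2)`. -/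
theorem lin {P : V → V → R} (hP : LPoly k (fun v : V × V => P v.1 v.2)) (a b c d : k) :
    LPoly k (fun v : V × V => P (a • v.1 + b • v.2) (c • v.1 + d • v.2)) :=
  hP.comp ((a • LinearMap.fst k V V + b • LinearMap.snd k V V).prod
    (c • LinearMap.fst k V V + d • LinearMap.snd k V V))

end LPoly

theorem func_eq {k V R : Type*} [Field k] [CharZero k] [AddCommGroup V] [Module k V]
    [CommRing R] [IsDomain R] [Algebra k R] (P : V → V → R)
    (hP : LPoly k (fun v : V × V => P v.1 v.2)) (N : ℕ) (hN : 2 ≤ N)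
    (hom : ∀ (t : k) (p q : V), P (t • p) (t • q) = algebraMap k R t ^ N * P p q)
    (star : ∀ p q r, P p (q + r) * P q r = P (p + q) r * P p q + P q (p + r) * P p r) :
    ((∀ p, P p 0 = 0) ∧ (∀ p, P 0 p = 0) ∧ (∀ p, P p p = 0)) ∧ (3 ≤ N → ∀ p q, P p q = 0) := by
  by_cases hz : ∀ p q, P p q = 0
  · simp [hz]
  have hinj := (algebraMap k R).injective
  have : CharZero R := charZero_of_injective_algebraMap hinj
  have key : ∀ Q : V → V → R, LPoly k (fun v : V × V => Q v.1 v.2) →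
      (∀ p q, P p q * Q p q = 0) → ∀ p q, Q p q = 0 := by
    intro Q hQ h
    rcases hP.mul_zero hQ (fun v => h v.1 v.2) with h1 | h1
    · exact absurd (fun p q => h1 (p, q)) hz
    · exact fun p q => h1 (p, q)
  have hom2 : ∀ (p q : V), P (2 • p) (2 • q) = 2 ^ N * P p q := by
    intro p q
    have := hom 2 p q
    rw [map_ofNat] at this
    simpa only [two_smul] using this
  have hpp : ∀ p, P p p = 0 := by
    intro p
    have h := star p p (2 • p)
    have h2 : P (2 • p) (2 • p) * P p p = 0 := by
      rw [← two_nsmul] at h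
      linear_combination -h
    rw [hom2] at h2
    have h3 : (2:R) ^ N ≠ 0 := pow_ne_zero _ two_ne_zero
    simpa [h3] using h2
  have h00 : P 0 0 = 0 := hpp 0
  have hadd : ∀ q r, P 0 (q + r) - P 0 q - P 0 r = 0 := by
    apply key
    · have a := hP.lin 0 0 1 1
      have b := hP.lin 0 0 1 0
      have c := hP.lin 0 0 0 1
      simpa using (a.sub b).sub c
    · intro q r
      have := star 0 q r
      simp only [zero_add] at this
      linear_combination this
  have h0p : ∀ p, P 0 p = 0 := by
    intro p
    have h := hadd p p
    have h2 := hom2 0 p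
    rw [← two_nsmul] at h
    rw [smul_zero] at h2
    obtain ⟨m, rfl⟩ := Nat.exists_eq_add_of_le hN
    have h3 : ((2 ^ (2+m) - 2 : ℤ) : R) * P 0 p = 0 := by
      push_cast
      linear_combination h - h2
    rcases mul_eq_zero.1 h3 with h4 | h4
    · have h5 : (2 ^ (2+m) - 2 : ℤ) = 0 := by exact_mod_cast h4
      have h6 : (1:ℤ) ≤ 2 ^ m := one_le_pow₀ (by norm_num)
      rw [pow_add] at h5
      omega
    · exact h4
  have hp0 : ∀ p, P p 0 = 0 := by
    intro p
    have := star p 0 0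
    simp [h0p] at this
    exact this
  refine ⟨⟨hp0, h0p, hpp⟩, fun hN3 => ?_⟩
  exfalso
  have skew0 : ∀ p q, P (p + q) q + P q (p + q) = 0 := by
    apply key
    · simpa using (hP.lin 1 1 0 1).add (hP.lin 0 1 1 1)
    · intro p q
      have := star p q q
      rw [hpp] at this
      linear_combination -this
  have skew : ∀ p q, P p q = - P q p := by
    intro p q
    have := skew0 (p - q) q
    rw [sub_add_cancel] at this
    linear_combination this
  have cyc : ∀ q r, P (-q) (q + r) * P q r = P q (r - q) * P (-q) r := by
    intro q r
    have := star (-q) q r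
    rw [neg_add_cancel, h0p, neg_add_eq_sub] at this
    linear_combination this
  have shear : ∀ (t : k) (q r : V), P q (r + t • q) = P q r := by
    intro t
    have h1 : ∀ q r : V, P (-q) (q + r) * (P q (r + t • q) - P q r) = 0 := by
      apply key
      · have a := hP.lin (-1) 0 1 1
        have b := hP.lin 1 0 t 1
        simpa [add_comm] using a.mul (b.sub hP)
      · intro q r
        obtain ⟨U, hU⟩ := hP (q, r) (0, q)
        obtain ⟨U', hU'⟩ := hP (-q, q + r) (0, q)
        simp only [Prod.fst_add, Prod.snd_add, Prod.smul_fst, Prod.smul_snd, smul_zero, add_zero] at hU hU'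
        have hper : ∀ n : ℕ, (U * U').eval (algebraMap k R n) = (U * U').eval (algebraMap k R 0) := by
          intro n
          induction n with
          | zero => simp
          | succ n ih =>
            rw [← ih]
            rw [Polynomial.eval_mul, Polynomial.eval_mul, ← hU, ← hU', ← hU, ← hU']
            have := cyc q (r + ((n + 1 : ℕ) : k) • q)
            have e1 : q + (r + ((n + 1 : ℕ) : k) • q) = q + r + ((n + 1 : ℕ) : k) • q := by abel
            have e2 : r + ((n + 1 : ℕ) : k) • q - q = r + (n : k) • q := by
              push_cast; module
            have e3 : r + ((n + 1 : ℕ) : k) • q = q + r + (n : k) • q := by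
              push_cast; module
            rw [e1, e2] at this
            rw [mul_comm, this, e3]
        have hc : U * U' = Polynomial.C ((U * U').eval (algebraMap k R 0)) := by
          rw [← sub_eq_zero]
          apply LPoly.poly_zero (k := k)
          intro n
          rw [Polynomial.eval_sub, hper, Polynomial.eval_C, sub_self]
        have hv : (U * U').eval (algebraMap k R 0) = P q r * P (-q) (q + r) := by
          rw [Polynomial.eval_mul, ← hU, ← hU', zero_smul, add_zero, add_zero]
        by_cases hnz : P q r * P (-q) (q + r) = 0
        · rw [← mul_assoc, hnz, zero_mul]
        · rw [hv] at hc
          have hd := Polynomial.natDegree_C (P q r * P (-q) (q + r))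
          have hne : U * U' ≠ 0 := by rw [hc]; simpa using hnz
          rw [← hc, Polynomial.natDegree_mul (left_ne_zero_of_mul hne) (right_ne_zero_of_mul hne)] at hd
          obtain ⟨a, ha⟩ := Polynomial.natDegree_eq_zero.1 (show U.natDegree = 0 by omega)
          have e1 := hU t
          have e2 := hU 0
          rw [← ha, Polynomial.eval_C] at e1 e2
          rw [zero_smul, add_zero] at e2
          rw [e1, e2, sub_self, MulZeroClass.mul_zero, MulZeroClass.mul_zero]
    rcases LPoly.mul_zero (f := fun v : V × V => P (-v.1) (v.1 + v.2))
        (g := fun v : V × V => P v.1 (v.2 + t • v.1) - P v.1 v.2)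
        (by simpa using hP.lin (-1) 0 1 1)
        (by simpa [add_comm] using (hP.lin 1 0 t 1).sub hP) (fun v => h1 v.1 v.2) with h2 | h2
    · refine absurd (fun p q => ?_) hz
      have := h2 (-p, p + q)
      simpa using this
    · intro q r
      exact sub_eq_zero.1 (h2 (q, r))
  have shear' : ∀ (t : k) (q r : V), P (q + t • r) r = P q r := by
    intro t q r
    rw [skew, shear, ← skew]
  -- rotation
  have rot : ∀ a b, P b (-a) = P a b := by
    intro a b
    rw [← shear 1 b (-a), ← shear' (-1) b _, ← shear 1 _ ((-a) + (1:k) • b)]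
    congr 1 <;> module
  have two : ∀ q r, P ((2:k) • q) r = P q ((2:k) • r) := by
    intro q r
    have e1 := shear (1/2) ((2:k) • q) r
    have e2 := shear' (-2) ((2:k) • q) (r + q)
    have e3 := shear (1/2) ((-2:k) • r) (r + q)
    have e4 := rot ((-2:k) • r) q
    have f1 : r + (1/2:k) • (2:k) • q = r + q := by module
    have f2 : (2:k) • q + (-2:k) • (r + q) = (-2:k) • r := by module
    have f3 : r + q + (1/2:k) • (-2:k) • r = q := by module
    have f4 : -((-2:k) • r) = (2:k) • r := by module
    rw [f1] at e1
    rw [f2] at e2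
    rw [f3] at e3
    rw [f4] at e4
    rw [← e1, ← e2, ← e3, e4]
  have four : ∀ q r, P ((4:k) • q) r = 2 ^ N * P q r := by
    intro q r
    have f : (4:k) • q = (2:k) • (2:k) • q := by module
    rw [f, two, hom, map_ofNat]
  apply hz
  intro q r
  by_contra hc
  have recu : ∀ x : k, P ((x - 1) • q) r * P q r =
      - (P ((x + 1) • q) r * P q r) + P ((2:k) • q) r * P (x • q) r := by
    intro x
    have h := star (x • q + r) q r
    have g1 : P (x • q + r) (q + r) = P ((x - 1) • q) r := by
      rw [← shear' (-1) _ (q + r)]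
      have f : x • q + r + (-1:k) • (q + r) = (x - 1) • q := by module
      rw [f]
      by_cases hx : x - 1 = 0
      · rw [hx, zero_smul, h0p, h0p]
      · rw [← shear (1/(x-1)) _ r]
        congr 1
        rw [smul_smul, one_div, inv_mul_cancel₀ hx, one_smul, add_comm]
    have g2 : P (x • q + r + q) r = P ((x + 1) • q) r := by
      rw [← shear' 1 ((x + 1) • q) r]
      congr 1
      module
    have g3 : P (x • q + r) q = - P q r := by
      rw [← skew, ← shear' x r q]
      congr 1
      module
    have g4 : P q (x • q + r + r) = P ((2:k) • q) r := by
      rw [two, ← shear x q ((2:k) • r)]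
      congr 1
      module
    have g5 : P (x • q + r) r = P (x • q) r := by
      rw [← shear' 1 (x • q) r, one_smul]
    rw [g1, g2, g3, g4, g5] at h
    linear_combination h
  have r2 := recu 2
  have r3 := recu 3
  have r4 := recu 4
  have r5 := recu 5
  have r6 := recu 6
  have r7 := recu 7
  have h8 : P ((8:k) • q) r = 2 ^ N * P ((2:k) • q) r := by
    rw [← four, smul_smul]; norm_num
  have h4 := four q r
  norm_num at r2 r3 r4 r5 r6 r7
  generalize P q r = c at *
  generalize P ((2:k) • q) r = u at *
  generalize P ((3:k) • q) r = F3 at *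
  generalize P ((4:k) • q) r = F4 at *
  generalize P ((5:k) • q) r = F5 at *
  generalize P ((6:k) • q) r = F6 at *
  generalize P ((7:k) • q) r = F7 at *
  generalize P ((8:k) • q) r = F8 at *
  have s3 : c * F3 = u ^ 2 - c ^ 2 := by linear_combination r2
  have s4 : c ^ 2 * F4 = u ^ 3 - 2 * u * c ^ 2 := by
    linear_combination c * r3 + u * s3
  have s5 : c ^ 3 * F5 = u ^ 4 - 3 * u ^ 2 * c ^ 2 + c ^ 4 := by
    linear_combination c ^ 2 * r4 + u * s4 - c ^ 2 * s3
  have s6 : c ^ 4 * F6 = u ^ 5 - 4 * u ^ 3 * c ^ 2 + 3 * u * c ^ 4 := by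
    linear_combination c ^ 3 * r5 + u * s5 - c ^ 2 * s4
  have s7 : c ^ 5 * F7 = u ^ 6 - 5 * u ^ 4 * c ^ 2 + 6 * u ^ 2 * c ^ 4 - c ^ 6 := by
    linear_combination c ^ 4 * r6 + u * s6 - c ^ 2 * s5
  have s8 : c ^ 6 * F8 = u ^ 7 - 6 * u ^ 5 * c ^ 2 + 10 * u ^ 3 * c ^ 4 - 4 * u * c ^ 6 := by
    linear_combination c ^ 5 * r7 + u * s7 - c ^ 2 * s6
  rw [h4] at s4
  rw [h8] at s8
  have hT : (2:R) ^ N * c ^ 3 ≠ 0 := mul_ne_zero (pow_ne_zero _ two_ne_zero) (pow_ne_zero _ hc)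
  have fin : ((2:R) ^ N * c ^ 3) * ((u - 2 * c) * ((u + c) * (u ^ 2 + u * c - c ^ 2))) = 0 := by
    linear_combination (u ^ 4 - 4 * u ^ 2 * c ^ 2 + 2 * c ^ 4) * s4 - s8
  have c3 : c ^ 3 ≠ 0 := pow_ne_zero _ hc
  have c8 : (8 : ℤ) ≤ 2 ^ N := by
    calc (8:ℤ) = 2 ^ 3 := by norm_num
      _ ≤ 2 ^ N := pow_le_pow_right₀ (by norm_num) hN3
  have fini : ∀ m : ℤ, m < 8 → (2:R) ^ N * c ^ 3 = m * c ^ 3 → False := by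
    intro m hm h
    have h2 := mul_right_cancel₀ c3 h
    have h3 : (2:ℤ) ^ N = m := by exact_mod_cast h2
    omega
  rcases mul_eq_zero.1 fin with h | h
  · exact hT h
  rcases mul_eq_zero.1 h with h | h
  · obtain rfl : u = 2 * c := by linear_combination h
    exact fini 4 (by norm_num) (by push_cast; linear_combination s4)
  rcases mul_eq_zero.1 h with h | h
  · obtain rfl : u = - c := by linear_combination h
    exact fini 1 (by norm_num) (by push_cast; linear_combination s4)
  · exact fini (-1) (by norm_num) (by push_cast; linear_combination s4 + (u - c) * h)

theorem vand {k M : Type*} [Field k] [CharZero k] [AddCommGroup M] [Module k M] (m : ℕ) (c : ℕ → M)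
    (h : ∀ t : k, ∑ i ∈ Finset.range m, t ^ i • c i = 0) : ∀ i < m, c i = 0 := by
  intro i hi
  rw [← Module.forall_dual_apply_eq_zero_iff k]
  intro f
  have hp : (∑ i ∈ Finset.range m, Polynomial.C (f (c i)) * Polynomial.X ^ i) = 0 := by
    apply Polynomial.eq_zero_of_infinite_isRoot
    convert (Set.infinite_univ (α := k)) using 1
    ext t
    simp only [Set.mem_ofPred_eq, Set.mem_univ, iff_true, Polynomial.IsRoot, Polynomial.eval_finsetSum]
    have := congrArg f (h t)
    rw [map_sum, map_zero] at this
    rw [← this]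
    refine Finset.sum_congr rfl fun j _ => ?_
    rw [map_smul, smul_eq_mul, Polynomial.eval_mul, Polynomial.eval_C, Polynomial.eval_pow, Polynomial.eval_X, mul_comm]
  have := congrArg (fun p => Polynomial.coeff p i) hp
  simpa [Polynomial.finsetSum_coeff, Polynomial.coeff_C_mul, Polynomial.coeff_X_pow, hi] using this

section Sym
variable {k A : Type*} [Field k] [CommRing A] [Algebra k A]

def d1 : A →ₗ[k] Module.End k (A →ₗ[k] A →ₗ[k] A) :=
  LinearMap.mk₂ k (fun p C => C.comp (LinearMap.mulLeft k p) - p • C)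
    (by intros; ext; simp [add_mul]; ring) (by intros; ext; simp [smul_sub])
    (by intros; ext; simp; ring) (by intros; ext; simp [smul_sub])

def d2 : A →ₗ[k] Module.End k (A →ₗ[k] A →ₗ[k] A) :=
  LinearMap.mk₂ k (fun p C => C.compl₂ (LinearMap.mulLeft k p) - p • C)
    (by intros; ext; simp [add_mul]; ring) (by intros; ext; simp [smul_sub])
    (by intros; ext; simp; ring) (by intros; ext; simp [smul_sub])

theorem d1_apply (p : A) (C : A →ₗ[k] A →ₗ[k] A) (x y : A) :
    d1 p C x y = C (p * x) y - p * C x y := by simp [d1]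

theorem d2_apply (p : A) (C : A →ₗ[k] A →ₗ[k] A) (x y : A) :
    d2 p C x y = C x (p * y) - p * C x y := by simp [d2]

def dl : A × A →ₗ[k] Module.End k (A →ₗ[k] A →ₗ[k] A) := d1.coprod d2

theorem dl_apply (p q : A) (C : A →ₗ[k] A →ₗ[k] A) (x y : A) :
    dl (p, q) C x y = C (p * x) y - p * C x y + (C x (q * y) - q * C x y) := by
  simp [dl, d1_apply, d2_apply]

theorem d12_comm (p q : A) : Commute (d1 (k := k) p) (d2 q) := by
  refine LinearMap.ext fun C => LinearMap.ext fun x => LinearMap.ext fun y => ?_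
  simp only [Module.End.mul_apply, d1_apply, d2_apply]
  ring

theorem dl_comm (v w : A × A) : Commute (dl (k := k) v) (dl w) := by
  refine LinearMap.ext fun C => LinearMap.ext fun x => LinearMap.ext fun y => ?_
  obtain ⟨p, q⟩ := v
  obtain ⟨p', q'⟩ := w
  simp only [Module.End.mul_apply, dl_apply, mul_left_comm p p', mul_left_comm q q']
  ring

theorem dl_pow_expand (v w : A × A) (t : k) (N : ℕ) (C : A →ₗ[k] A →ₗ[k] A) :
    (dl (v + t • w) ^ N) C =
      ∑ i ∈ Finset.range (N + 1), t ^ i • (N.choose i • ((dl w ^ i) ((dl v ^ (N - i)) C))) := by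
  rw [map_add, map_smul, add_comm, (((dl_comm w v).smul_left t)).add_pow]
  rw [LinearMap.sum_apply]
  refine Finset.sum_congr rfl fun i _ => ?_
  rw [← (Nat.cast_commute _ _).eq, ← nsmul_eq_mul, smul_pow, smul_mul_assoc, LinearMap.smul_apply,
    LinearMap.smul_apply, Module.End.mul_apply, smul_comm]

theorem top_kill [CharZero k] (N : ℕ) (C : A →ₗ[k] A →ₗ[k] A) (h : ∀ v, (dl v ^ (N + 1)) C = 0)
    (v w : A × A) : dl w ((dl v ^ N) C) = 0 := by
  have := vand (k := k) (N + 1 + 1)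
    (fun i => (N + 1).choose i • ((dl w ^ i) ((dl v ^ (N + 1 - i)) C)))
    (fun t => by rw [← dl_pow_expand]; exact h _) 1 (by omega)
  simp only [Nat.choose_one_right, pow_one, Nat.add_sub_cancel] at this
  have h2 : ((N + 1 : ℕ) : k) • (dl w ((dl v ^ N) C)) = 0 := by rw [Nat.cast_smul_eq_nsmul, this]
  rcases smul_eq_zero.1 h2 with h3 | h3
  · exact absurd h3 (by exact_mod_cast Nat.succ_ne_zero N)
  · exact h3

def symb (N : ℕ) (C : A →ₗ[k] A →ₗ[k] A) (p q : A) : A := (dl (p, q) ^ N) C 1 1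

theorem top_eq [CharZero k] (N : ℕ) (C : A →ₗ[k] A →ₗ[k] A) (h : ∀ v, (dl v ^ (N + 1)) C = 0)
    (p q x y : A) : (dl (p, q) ^ N) C x y = symb N C p q * x * y := by
  have h1 := top_kill N C h (p, q) (x, 0)
  have h2 := top_kill N C h (p, q) (0, y)
  have e1 := LinearMap.congr_fun (LinearMap.congr_fun h1 1) y
  have e2 := LinearMap.congr_fun (LinearMap.congr_fun h2 1) 1
  simp only [dl_apply, LinearMap.zero_apply, zero_mul, mul_one, map_zero] at e1 e2
  rw [symb]
  linear_combination e1 + x * e2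

theorem symb_poly (N : ℕ) (C : A →ₗ[k] A →ₗ[k] A) {R : Type*} [CommRing R] [Algebra k R]
    (φ : A →ₐ[k] R) : LPoly k (fun v : A × A => φ (symb N C v.1 v.2)) := by
  intro v w
  refine ⟨∑ i ∈ Finset.range (N + 1),
    Polynomial.C (φ ((N.choose i • ((dl w ^ i) ((dl v ^ (N - i)) C))) 1 1)) * Polynomial.X ^ i, ?_⟩
  intro t
  simp only [symb, Prod.mk.eta]
  rw [dl_pow_expand, LinearMap.sum_apply, LinearMap.sum_apply, map_sum, Polynomial.eval_finsetSum]
  refine Finset.sum_congr rfl fun i _ => ?_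
  rw [LinearMap.smul_apply, LinearMap.smul_apply, map_smul]
  simp [Algebra.smul_def, mul_comm]

theorem symb_hom (N : ℕ) (C : A →ₗ[k] A →ₗ[k] A) (t : k) (p q : A) :
    symb N C (t • p) (t • q) = t ^ N • symb N C p q := by
  rw [symb, symb, ← Prod.smul_mk, map_smul, smul_pow]
  rfl

/-- abstract Leibniz -/
theorem leib {L T : Type*} [AddCommGroup L] [AddCommGroup T] (β : L →+ L →+ T)
    (a b : L →+ L) (d : T →+ T) (h : ∀ C D, d (β C D) = β (a C) D + β C (b D)) (n : ℕ) (C D : L) :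
    d^[n] (β C D) = ∑ ij ∈ Finset.HasAntidiagonal.antidiagonal n, n.choose ij.1 • β (a^[ij.1] C) (b^[ij.2] D) := by
  induction n with
  | zero => simp
  | succ n ih =>
    rw [Function.iterate_succ_apply', ih, map_sum,
      Finset.sum_antidiagonal_choose_succ_nsmul (fun i j => β (a^[i] C) (b^[j] D))]
    simp only [map_nsmul, h, smul_add, Finset.sum_add_distrib, Function.iterate_succ_apply']
    rw [add_comm]
    congr 1
    refine Finset.sum_congr rfl fun ij hij => ?_
    rw [← Finset.HasAntidiagonal.mem_antidiagonal.1 hij, Nat.choose_symm_add]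

theorem leib_top {L T : Type*} [AddCommGroup L] [AddCommGroup T] (β : L →+ L →+ T)
    (a b : L →+ L) (d : T →+ T) (h : ∀ C D, d (β C D) = β (a C) D + β C (b D)) (N : ℕ) (C D : L)
    (hC : a^[N + 1] C = 0) (hD : b^[N + 1] D = 0) :
    d^[N + N] (β C D) = (N + N).choose N • β (a^[N] C) (b^[N] D) := by
  have hz : ∀ (f : L →+ L) (X : L) (i : ℕ), f^[N + 1] X = 0 → N < i → f^[i] X = 0 := by
    intro f X i hX hi
    obtain ⟨j, rfl⟩ := Nat.exists_eq_add_of_lt hi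
    rw [show N + j + 1 = j + (N + 1) by ring, Function.iterate_add_apply, hX, iterate_map_zero]
  rw [leib β a b d h, Finset.sum_eq_single (N, N)]
  · rintro ⟨i, j⟩ hij hne
    have := Finset.HasAntidiagonal.mem_antidiagonal.1 hij
    simp only at this ⊢
    by_cases hi : N < i
    · rw [hz a C i hC hi]; simp
    · by_cases hj : N < j
      · rw [hz b D j hD hj]; simp
      · exact absurd (Prod.ext (show i = N by omega) (show j = N by omega)) hne
  · intro h; simp at h

def tri (p q r : A) : (A → A → A → A) →+ (A → A → A → A) where
  toFun T := fun x y z => (T (p * x) y z - p * T x y z) + (T x (q * y) z - q * T x y z)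
    + (T x y (r * z) - r * T x y z)
  map_zero' := by ext; simp
  map_add' := by intros; ext; simp; ring

def b1 : (A →ₗ[k] A →ₗ[k] A) →+ (A →ₗ[k] A →ₗ[k] A) →+ (A → A → A → A) :=
  AddMonoidHom.mk' (fun C => AddMonoidHom.mk' (fun D x y z => C x (D y z))
    (by intros; ext; simp)) (by intros; ext; simp)

def b2 : (A →ₗ[k] A →ₗ[k] A) →+ (A →ₗ[k] A →ₗ[k] A) →+ (A → A → A → A) :=
  AddMonoidHom.mk' (fun C => AddMonoidHom.mk' (fun D x y z => C (D x y) z)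
    (by intros; ext; simp)) (by intros; ext; simp)

def b3 : (A →ₗ[k] A →ₗ[k] A) →+ (A →ₗ[k] A →ₗ[k] A) →+ (A → A → A → A) :=
  AddMonoidHom.mk' (fun C => AddMonoidHom.mk' (fun D x y z => C y (D x z))
    (by intros; ext; simp)) (by intros; ext; simp)

theorem symb_star [CharZero k] (N : ℕ) (C : A →ₗ[k] A →ₗ[k] A) (h : ∀ v, (dl v ^ (N + 1)) C = 0)
    (hj : ∀ x y z, C x (C y z) = C (C x y) z + C y (C x z)) (p q r : A) :
    symb N C p (q + r) * symb N C q r =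
      symb N C (p + q) r * symb N C p q + symb N C q (p + r) * symb N C p r := by
  have hit : ∀ v n, (⇑(dl (k := k) v).toAddMonoidHom)^[n] C = (dl v ^ n) C := by
    intro v n
    rw [Module.End.pow_apply]; rfl
  have e1 := leib_top b1 (dl (k := k) (p, q + r)).toAddMonoidHom (dl (q, r)).toAddMonoidHom
    (tri p q r) (by
      intro C D; ext x y z
      simp [tri, b1, dl_apply, add_mul]; ring) N C C (by rw [hit, h]) (by rw [hit, h])
  have e2 := leib_top b2 (dl (k := k) (p + q, r)).toAddMonoidHom (dl (p, q)).toAddMonoidHom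
    (tri p q r) (by
      intro C D; ext x y z
      simp [tri, b2, dl_apply, add_mul]; ring) N C C (by rw [hit, h]) (by rw [hit, h])
  have e3 := leib_top b3 (dl (k := k) (q, p + r)).toAddMonoidHom (dl (p, r)).toAddMonoidHom
    (tri p q r) (by
      intro C D; ext x y z
      simp [tri, b3, dl_apply, add_mul]; ring) N C C (by rw [hit, h]) (by rw [hit, h])
  have hjj : b1 C C = b2 C C + b3 C C := by
    ext x y z; exact hj x y z
  rw [hjj, iterate_map_add, e2, e3] at e1
  simp only [hit] at e1
  have e4 := congrFun (congrFun (congrFun e1 1) 1) 1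
  simp only [Pi.add_apply, Pi.smul_apply, b1, b2, b3, AddMonoidHom.mk'_apply, top_eq N C h, mul_one]
    at e4
  rw [← smul_add, ← Nat.cast_smul_eq_nsmul k, ← Nat.cast_smul_eq_nsmul k] at e4
  have hne : (((N + N).choose N : ℕ) : k) ≠ 0 := by
    exact_mod_cast (Nat.choose_pos (Nat.le_add_left N N)).ne'
  have e5 := smul_right_injective A hne e4
  linear_combination -e5

theorem symb_prime [CharZero k] [IsReduced A] (N : ℕ) (hN : 2 ≤ N) (C : A →ₗ[k] A →ₗ[k] A)
    (h : ∀ v, (dl v ^ (N + 1)) C = 0)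
    (hj : ∀ x y z, C x (C y z) = C (C x y) z + C y (C x z)) :
    ((∀ p, symb N C p 0 = 0) ∧ (∀ p, symb N C 0 p = 0) ∧ (∀ p, symb N C p p = 0)) ∧
      (3 ≤ N → ∀ p q, symb N C p q = 0) := by
  have zero : ∀ a : A, (∀ I : Ideal A, I.IsPrime → Ideal.Quotient.mkₐ k I a = 0) → a = 0 := by
    intro a ha
    have : a ∈ nilradical A := by
      rw [nilradical_eq_sInf, Ideal.mem_sInf]
      intro I hI
      have := ha I hI
      exact Ideal.Quotient.eq_zero_iff_mem.1 this
    rwa [nilradical_eq_zero] at this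
  have main := fun (I : Ideal A) (hI : I.IsPrime) =>
    func_eq (k := k) (fun p q => Ideal.Quotient.mkₐ k I (symb N C p q))
      (symb_poly N C (Ideal.Quotient.mkₐ k I)) N hN
      (by
        intro t p q
        simp only [symb_hom]
        rw [map_smul, Algebra.smul_def, map_pow])
      (by
        intro p q r
        rw [← map_mul, symb_star N C h hj, map_add, map_mul, map_mul])
  refine ⟨⟨fun p => zero _ fun I hI => ?_, fun p => zero _ fun I hI => ?_,
    fun p => zero _ fun I hI => ?_⟩, fun h3 p q => zero _ fun I hI => ?_⟩
  · exact (main I hI).1.1 p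
  · exact (main I hI).1.2.1 p
  · exact (main I hI).1.2.2 p
  · exact (main I hI).2 h3 p q

theorem descend [CharZero k] [IsReduced A] (N : ℕ) (C : A →ₗ[k] A →ₗ[k] A)
    (h : ∀ v, (dl v ^ (2 + N + 1)) C = 0)
    (hj : ∀ x y z, C x (C y z) = C (C x y) z + C y (C x z)) : ∀ v, (dl v ^ (2 + 1)) C = 0 := by
  induction N with
  | zero => exact h
  | succ N ih =>
    apply ih
    rintro ⟨p, q⟩
    ext x y
    have := top_eq _ C h p q x y
    rw [(symb_prime (2 + (N + 1)) (by omega) C h hj).2 (by omega), zero_mul, zero_mul] at this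
    exact this

theorem diffop_iter (p : A) (n : ℕ) (D : A → A) (h : IsDiffOpLE n D) : (delta p)^[n + 1] D = 0 := by
  induction n generalizing D with
  | zero => exact h p
  | succ n ih => rw [Function.iterate_succ_apply]; exact ih _ (h p)

theorem init_ord (n : ℕ) (C : A →ₗ[k] A →ₗ[k] A)
    (horder : ∀ x : A, IsDiffOpLE n (fun y => C x y) ∧ IsDiffOpLE n (fun y => C y x)) (v : A × A) (m : ℕ)
    (hm : 2 * n + 1 ≤ m) : (dl v ^ m) C = 0 := by
  obtain ⟨p, q⟩ := v
  have c1 : ∀ (m : ℕ) (x : A), (fun y => (d1 p ^ m) C y x) = (delta p)^[m] (fun y => C y x) := by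
    intro m x
    induction m with
    | zero => rfl
    | succ m ih =>
      rw [Function.iterate_succ_apply', ← ih, pow_succ']
      ext y
      simp [Module.End.mul_apply, d1_apply, delta]
  have c2 : ∀ (m : ℕ) (x : A), (fun y => (d2 q ^ m) C x y) = (delta q)^[m] (fun y => C x y) := by
    intro m x
    induction m with
    | zero => rfl
    | succ m ih =>
      rw [Function.iterate_succ_apply', ← ih, pow_succ']
      ext y
      simp [Module.End.mul_apply, d2_apply, delta]
  have z1 : (d1 p ^ (n + 1)) C = 0 := by
    ext y x
    have := c1 (n + 1) x
    rw [diffop_iter p n _ (horder x).2] at this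
    exact congrFun this y
  have z2 : (d2 q ^ (n + 1)) C = 0 := by
    ext x y
    have := c2 (n + 1) x
    rw [diffop_iter q n _ (horder x).1] at this
    exact congrFun this y
  have e : dl (k := k) (p, q) = d1 p + d2 q := by simp [dl]
  rw [e, (d12_comm p q).add_pow, LinearMap.sum_apply]
  refine Finset.sum_eq_zero fun i hi => ?_
  have hi' := Finset.mem_range.1 hi
  rw [← (Nat.cast_commute _ _).eq, ← nsmul_eq_mul, LinearMap.smul_apply]
  by_cases h : n + 1 ≤ i
  · obtain ⟨j, rfl⟩ := Nat.exists_eq_add_of_le' h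
    rw [((d12_comm p q).pow_pow _ _).eq, Module.End.mul_apply, pow_add, Module.End.mul_apply, z1]
    simp
  · obtain ⟨j, hj⟩ := Nat.exists_eq_add_of_le' (show n + 1 ≤ m - i by omega)
    rw [hj, Module.End.mul_apply, pow_add, Module.End.mul_apply, z2]
    simp

end Sym

theorem endgame {A : Type*} [CommRing A] [IsReduced A] (htwo : ∀ a : A, 2 * a = 0 → a = 0)
    (B : A → A → A)
    (haddl : ∀ a b c : A, B (a + b) c = B a c + B b c)
    (haddr : ∀ a b c : A, B a (b + c) = B a b + B a c)
    (h1 : ∀ x p q, B x (p * q) = p * B x q + q * B x p - p * q * B x 1)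
    (h2 : ∀ x p q, B (p * q) x = p * B q x + q * B p x - p * q * B 1 x)
    (h3 : ∀ p, B p p = p * B p 1 + p * B 1 p - p * p * B 1 1)
    (hjacobi : ∀ x y z : A, B x (B y z) = B (B x y) z + B y (B x z)) :
    (∀ x, B x 1 + B 1 x = 0) ∧ B 1 1 = 0 := by
  have sq : ∀ a : A, a * a = 0 → a = 0 := fun a h => by
    have : a ^ 2 = 0 := by rw [pow_two, h]
    simpa using this
  set c := B 1 1 with hc
  obtain ⟨G, hG⟩ : ∃ G : A → A, ∀ x, G x = B 1 x - c * x := ⟨_, fun _ => rfl⟩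
  obtain ⟨H, hH⟩ : ∃ G : A → A, ∀ x, G x = B x 1 - c * x := ⟨_, fun _ => rfl⟩
  obtain ⟨E, hE⟩ : ∃ E : A → A, ∀ x, E x = G x + H x := ⟨_, fun _ => rfl⟩
  obtain ⟨L, hL⟩ : ∃ L : A → A → A, ∀ x y, L x y = B x y - x * B 1 y - y * B x 1 + x * y * c :=
    ⟨_, fun _ _ => rfl⟩
  have Gm : ∀ x y, G (x * y) = x * G y + G x * y := by
    intro x y; rw [hG, hG, hG, h1, ← hc]; ring
  have Hm : ∀ x y, H (x * y) = x * H y + H x * y := by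
    intro x y; rw [hH, hH, hH, h2, ← hc]; ring
  have Em : ∀ x y, E (x * y) = x * E y + E x * y := by
    intro x y; rw [hE, hE, hE, Gm, Hm]; ring
  have Ga : ∀ x y, G (x + y) = G x + G y := by
    intro x y; rw [hG, hG, hG, haddr]; ring
  have Ha : ∀ x y, H (x + y) = H x + H y := by
    intro x y; rw [hH, hH, hH, haddl]; ring
  have Ea : ∀ x y, E (x + y) = E x + E y := by
    intro x y; rw [hE, hE, hE, Ga, Ha]; ring
  have La : ∀ x y z, L (x + y) z = L x z + L y z := by
    intro x y z; rw [hL, hL, hL, haddl, haddl]; ring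
  have Lm : ∀ x y z, L (x * y) z = x * L y z + L x z * y := by
    intro x y z; rw [hL, hL, hL, h2 z, h2 1]; ring
  have L1 : ∀ x, L x 1 = 0 := by
    intro x; rw [hL, ← hc]; ring
  have G1 : G 1 = 0 := by rw [hG, ← hc]; ring
  have H1 : H 1 = 0 := by rw [hH, ← hc]; ring
  have E1 : E 1 = 0 := by rw [hE, G1, H1]; ring
  have BL : ∀ x y, B x y = L x y + x * G y + H x * y + c * x * y := by
    intro x y; rw [hL, hG, hH]; ring
  have Bxx : ∀ x, B x x = x * E x + c * x * x := by
    intro x; rw [h3, hE, hG, hH]; ring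
  have Bsym : ∀ x y, B x y + B y x = x * E y + y * E x + (c + c) * (x * y) := by
    intro x y
    have := Bxx (x + y)
    rw [haddl, haddr, haddr, Ea, Bxx, Bxx] at this
    linear_combination this
  have Bsym0 : ∀ x y z, B (x * E y + y * E x + (c + c) * (x * y)) z = 0 := by
    intro x y z
    rw [← Bsym, haddl]
    linear_combination - hjacobi x y z - hjacobi y x z
  have HW : ∀ x y, H (x * E y + y * E x + (c + c) * (x * y)) +
      c * (x * E y + y * E x + (c + c) * (x * y)) = 0 := by
    intro x y
    have := Bsym0 x y 1
    rw [BL, L1, G1] at this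
    linear_combination this
  have LW : ∀ x y z, L (x * E y + y * E x + (c + c) * (x * y)) z +
      (x * E y + y * E x + (c + c) * (x * y)) * G z = 0 := by
    intro x y z
    have := Bsym0 x y z
    rw [BL] at this
    linear_combination this - z * HW x y
  have LW' := LW
  simp only [La, Lm] at LW'
  have L1' : ∀ z, L 1 z = 0 := by
    intro z; rw [hL, ← hc]; ring
  have EL2 : ∀ x y z, E y * L x z + E x * L y z = 0 := by
    intro x y z
    have a1 := LW' x y z
    have a2 := LW' x 1 z
    have a3 := LW' y 1 z
    have a4 := LW' 1 1 z
    have e : L (E 1) z = 0 := by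
      have := La 0 0 z
      rw [E1]
      rw [add_zero] at this
      linear_combination -this
    simp only [E1, L1'] at a2 a3 a4
    linear_combination a1 - y * a2 - x * a3 + x * y * a4
  have EL : ∀ x y z, E y * L x z = 0 := by
    intro x y z
    have b1 : E x * L x z = 0 := htwo _ (by linear_combination EL2 x x z)
    apply sq
    linear_combination E y * L x z * EL2 x y z - E y * L y z * b1
  have EWG : ∀ s x y z, E s * (x * E y + y * E x + (c + c) * (x * y)) * G z = 0 := by
    intro s x y z
    linear_combination E s * LW x y z - EL (x * E y + y * E x + (c + c) * (x * y)) s z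
  have EG : ∀ s z, E s * G z = 0 := by
    intro s z
    have b1 := EWG s 1 1 z
    have b2 := EWG s s 1 z
    rw [E1] at b1 b2
    apply sq
    linear_combination G z * b2 - s * G z * b1
  have EW : ∀ s x y, E s * (E (x * E y + y * E x + (c + c) * (x * y)) +
      c * (x * E y + y * E x + (c + c) * (x * y))) = 0 := by
    intro s x y
    rw [hE (x * E y + y * E x + (c + c) * (x * y))]
    linear_combination E s * HW x y + EG s (x * E y + y * E x + (c + c) * (x * y))
  simp only [Ea, Em] at EW
  have E0 : ∀ s, E s = 0 := by
    intro s
    have a1 := EW s s s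
    have a2 := EW s s 1
    have a4 := EW s 1 1
    have e : E 0 = 0 := by
      have := Ea 0 0
      rw [add_zero] at this
      linear_combination -this
    simp only [e, E1] at a2 a4
    have : E s * E s * E s = 0 := by
      apply htwo
      linear_combination a1 - 2 * s * a2 + s * s * a4
    have : E s ^ 3 = 0 := by linear_combination this
    simpa using this
  have hGH : ∀ x, H x = - G x := by
    intro x; have := hE x; rw [E0] at this; linear_combination -this
  have k1 : ∀ x, G (c * x) = c * c * x := by
    intro x
    have := HW x 1
    rw [E0, E0] at this
    rw [hGH] at this
    have f : x * 0 + 1 * 0 + (c + c) * (x * 1) = c * x + c * x := by ring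
    rw [f, Ga] at this
    have := htwo (- G (c * x) + c * c * x) (by linear_combination this)
    linear_combination -this
  have kc : G c = c * c := by have := k1 1; simpa using this
  have k2 := k1 c
  rw [Gm, kc] at k2
  have c0 : c = 0 := by
    have : c ^ 3 = 0 := by linear_combination k2
    simpa using this
  refine ⟨fun x => ?_, c0⟩
  have a := hGH x
  rw [hG, hH] at a
  rw [c0] at a
  linear_combination a

/-- **Theorem 2.** On a reduced commutative unital algebra over a field of
characteristic zero, every bidifferential Loday bracket is a standard
skew-symmetric Jacobi bracket `B(x,y) = Λ(x,y) + x·Γ(y) − y·Γ(x)` with `Γ` a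
derivation and `Λ` a skew-symmetric biderivation. -/
theorem differential_loday_bracket_is_jacobi
    {k : Type*} [Field k] [CharZero k]
    {A : Type*} [CommRing A] [Algebra k A] [IsReduced A]
    (B : A → A → A)
    (haddl : ∀ a b c : A, B (a + b) c = B a c + B b c)
    (haddr : ∀ a b c : A, B a (b + c) = B a b + B a c)
    (hsmull : ∀ (t : k) (a b : A), B (t • a) b = t • B a b)
    (hsmulr : ∀ (t : k) (a b : A), B a (t • b) = t • B a b)
    (n : ℕ)
    (horder : ∀ x : A, IsDiffOpLE n (fun y => B x y) ∧ IsDiffOpLE n (fun y => B y x))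
    (hjacobi : ∀ x y z : A, B x (B y z) = B (B x y) z + B y (B x z)) :
    ∃ (Γ : A → A) (Λ : A → A → A),
      (∀ a b : A, Γ (a + b) = Γ a + Γ b) ∧
      (∀ (t : k) (a : A), Γ (t • a) = t • Γ a) ∧
      (∀ a b : A, Γ (a * b) = a * Γ b + Γ a * b) ∧
      (∀ a b c : A, Λ (a + b) c = Λ a c + Λ b c) ∧
      (∀ a b c : A, Λ a (b + c) = Λ a b + Λ a c) ∧
      (∀ (t : k) (a b : A), Λ (t • a) b = t • Λ a b) ∧
      (∀ (t : k) (a b : A), Λ a (t • b) = t • Λ a b) ∧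
      (∀ a b : A, Λ a b = - Λ b a) ∧
      (∀ a b c : A, Λ a (b * c) = b * Λ a c + Λ a b * c) ∧
      (∀ a b c : A, Λ (a * b) c = a * Λ b c + Λ a c * b) ∧
      (∀ x y : A, B x y = Λ x y + x * Γ y - y * Γ x) := by
  classical
  let C : A →ₗ[k] A →ₗ[k] A := LinearMap.mk₂ k B haddl hsmull haddr hsmulr
  have hCB : ∀ x y, C x y = B x y := fun _ _ => rfl
  have hj : ∀ x y z, C x (C y z) = C (C x y) z + C y (C x z) := hjacobi
  have h0 := descend (2 * n) C (fun v => init_ord n C horder v _ (by omega)) hj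
  obtain ⟨⟨s1, s2, s3⟩, -⟩ := symb_prime 2 le_rfl C h0 hj
  have htwo : ∀ a : A, 2 * a = 0 → a = 0 := by
    intro a ha
    have h2 : (2:k) • a = 0 := by rw [Algebra.smul_def, map_ofNat, ha]
    exact (smul_eq_zero.1 h2).resolve_left two_ne_zero
  have z0 : ∀ x, B 0 x = 0 := fun x => by have := haddl 0 0 x; simpa using this
  have z0' : ∀ x, B x 0 = 0 := fun x => by have := haddr x 0 0; simpa using this
  have q1 : ∀ x p, B x (p * p) - 2 * p * B x p + p * p * B x 1 = 0 := by
    intro x p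
    have := top_eq 2 C h0 0 p x 1
    rw [s2, pow_two, Module.End.mul_apply] at this
    simp only [dl_apply, hCB, zero_mul, z0, mul_one] at this
    linear_combination this
  have q2 : ∀ x p, B (p * p) x - 2 * p * B p x + p * p * B 1 x = 0 := by
    intro x p
    have := top_eq 2 C h0 p 0 1 x
    rw [s1, pow_two, Module.End.mul_apply] at this
    simp only [dl_apply, hCB, zero_mul, z0', mul_one] at this
    linear_combination this
  have h1 : ∀ x p q, B x (p * q) = p * B x q + q * B x p - p * q * B x 1 := by
    intro x p q
    have a := q1 x (p + q)
    have e : (p + q) * (p + q) = p * p + q * q + (p * q + p * q) := by ring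
    rw [e, haddr, haddr, haddr, haddr] at a
    refine sub_eq_zero.1 (htwo _ ?_)
    linear_combination a - q1 x p - q1 x q
  have h2 : ∀ x p q, B (p * q) x = p * B q x + q * B p x - p * q * B 1 x := by
    intro x p q
    have a := q2 x (p + q)
    have e : (p + q) * (p + q) = p * p + q * q + (p * q + p * q) := by ring
    rw [e, haddl, haddl, haddl, haddl] at a
    refine sub_eq_zero.1 (htwo _ ?_)
    linear_combination a - q2 x p - q2 x q
  have h3 : ∀ p, B p p = p * B p 1 + p * B 1 p - p * p * B 1 1 := by
    intro p
    have a := s3 p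
    rw [symb, pow_two, Module.End.mul_apply] at a
    simp only [dl_apply, hCB, mul_one] at a
    refine sub_eq_zero.1 (htwo _ ?_)
    linear_combination a - q1 1 p - q2 1 p
  obtain ⟨hs, hc⟩ := endgame htwo B haddl haddr h1 h2 h3 hjacobi
  have hs' : ∀ x, B x 1 = - B 1 x := fun x => by linear_combination hs x
  have hpp : ∀ p, B p p = 0 := by
    intro p; rw [h3, hs', hc]; ring
  have hsk : ∀ p q, B p q = - B q p := by
    intro p q
    have := hpp (p + q)
    rw [haddl, haddr, haddr, hpp, hpp] at this
    linear_combination this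
  refine ⟨fun x => B 1 x, fun x y => B x y - x * B 1 y + y * B 1 x, ?_, ?_, ?_, ?_, ?_, ?_, ?_, ?_,
    ?_, ?_, ?_⟩
  · intro a b; exact haddr _ _ _
  · intro t a; exact hsmulr _ _ _
  · intro a b; simp only; rw [h1, hc]; ring
  · intro a b c; simp only; rw [haddl, haddr]; ring
  · intro a b c; simp only; rw [haddr, haddr]; ring
  · intro t a b; simp only; rw [hsmull, hsmulr]; simp [smul_add, smul_sub]
  · intro t a b; simp only; rw [hsmulr, hsmulr]; simp [smul_add, smul_sub]
  · intro a b; simp only; rw [hsk a b]; ring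
  · intro a b c; simp only; rw [h1 a, h1 1, hs' a, hc]; ring
  · intro a b c; simp only; rw [h2 c, h1 1, hc]; ring
  · intro x y; ring
end

section
/- Let k be a field of characteristic zero, n ≥ 1, and let A = k[x,y]/(x²) (equivalently, the dual numbers over the polynomial ring k[y]). Define the k-bilinear bracket D(u,v) = x·u·(∂ⁿv/∂yⁿ) on A, where ∂/∂y is the derivation of A induced by differentiation in y. Then D satisfies the Loday Jacobi identity D(u,D(v,w)) = D(D(u,v),w) + D(v,D(u,w)) for all u, v, w ∈ A, but D is not skew-symmetric; in particular D is a Loday bracket of differential order n which is not a Lie bracket. -/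
/-- The derivation `∂/∂y` of `A = k[x,y]/(x²)`, realized as the dual numbers
over the polynomial ring `k[y]` (so `x` is `ε` and `y` the polynomial
variable). -/
noncomputable def dY {k : Type*} [CommRing k]
    (a : DualNumber (Polynomial k)) : DualNumber (Polynomial k) :=
  TrivSqZeroExt.inl (Polynomial.derivative (TrivSqZeroExt.fst a)) +
    TrivSqZeroExt.inr (Polynomial.derivative (TrivSqZeroExt.snd a))

/-- The bracket `D(u,v) = x·u·(∂ⁿv/∂yⁿ)` on `A = k[x,y]/(x²)`. -/
noncomputable def lodayD {k : Type*} [CommRing k] (n : ℕ)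
    (u v : DualNumber (Polynomial k)) : DualNumber (Polynomial k) :=
  DualNumber.eps * u * (dY^[n] v)

theorem dY_fst {k : Type*} [CommRing k] (a : DualNumber (Polynomial k)) :
    TrivSqZeroExt.fst (dY a) = Polynomial.derivative (TrivSqZeroExt.fst a) := by
  simp [dY]

theorem dY_snd {k : Type*} [CommRing k] (a : DualNumber (Polynomial k)) :
    TrivSqZeroExt.snd (dY a) = Polynomial.derivative (TrivSqZeroExt.snd a) := by
  simp [dY]

theorem dY_iter_fst {k : Type*} [CommRing k] (n : ℕ) (a : DualNumber (Polynomial k)) :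
    TrivSqZeroExt.fst (dY^[n] a) = Polynomial.derivative^[n] (TrivSqZeroExt.fst a) := by
  induction n generalizing a with
  | zero => rfl
  | succ n ih => rw [Function.iterate_succ_apply, Function.iterate_succ_apply, ih, dY_fst]

theorem dY_add {k : Type*} [CommRing k] (a b : DualNumber (Polynomial k)) :
    dY (a + b) = dY a + dY b := by
  ext <;> simp [dY_fst, dY_snd]

theorem dY_mul {k : Type*} [CommRing k] (a b : DualNumber (Polynomial k)) :
    dY (a * b) = dY a * b + a * dY b := by
  apply TrivSqZeroExt.ext
  · simp [dY_fst]
  · simp [dY_fst, dY_snd]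
    ring

theorem isDiffOpLE_add {A : Type*} [CommRing A] (n : ℕ) (D E : A → A)
    (hD : IsDiffOpLE n D) (hE : IsDiffOpLE n E) : IsDiffOpLE n (fun y => D y + E y) := by
  have key : ∀ (D E : A → A) (x : A),
      delta x (fun y => D y + E y) = fun y => delta x D y + delta x E y := by
    intro D E x; funext y; simp only [delta]; ring
  induction n generalizing D E with
  | zero => intro x; rw [key, hD x, hE x]; funext y; simp
  | succ n ih => intro x; rw [key]; exact ih _ _ (hD x) (hE x)

theorem isDiffOpLE_comp_mul {A : Type*} [CommRing A] (n : ℕ) (D : A → A) (a : A)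
    (hD : IsDiffOpLE n D) : IsDiffOpLE n (fun y => D (a * y)) := by
  have key : ∀ (D : A → A) (x : A),
      delta x (fun y => D (a * y)) = fun y => delta x D (a * y) := by
    intro D x; funext y; simp only [delta]; rw [mul_left_comm]
  induction n generalizing D with
  | zero => intro x; rw [key, hD x]; rfl
  | succ n ih => intro x; rw [key]; exact ih _ (hD x)

theorem isDiffOpLE_mul {A : Type*} [CommRing A] (n : ℕ) (c : A) :
    IsDiffOpLE n (fun y => c * y) := by
  have h0 : ∀ c x : A, delta x (fun y => c * y) = fun y => 0 * y := by
    intro c x; funext y; simp only [delta]; ring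
  induction n generalizing c with
  | zero => intro x; rw [h0]; funext y; simp
  | succ n ih => intro x; rw [h0]; exact ih 0

theorem isDiffOpLE_comp_der {A : Type*} [CommRing A] (d : A → A)
    (hd : ∀ a b, d (a * b) = d a * b + a * d b) (n : ℕ) (D : A → A)
    (hadd : ∀ a b, D (a + b) = D a + D b)
    (hD : IsDiffOpLE n D) : IsDiffOpLE (n + 1) (fun y => D (d y)) := by
  have key : ∀ (D : A → A), (∀ a b, D (a + b) = D a + D b) → ∀ x : A,
      delta x (fun y => D (d y)) = fun y => D (d x * y) + delta x D (d y) := by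
    intro D h x; funext y; simp only [delta]; rw [hd, h]; ring
  induction n generalizing D with
  | zero =>
    intro x
    rw [key D hadd, hD x]
    simpa using isDiffOpLE_comp_mul 0 D (d x) hD
  | succ n ih =>
    intro x
    rw [key D hadd]
    refine isDiffOpLE_add _ _ _ (isDiffOpLE_comp_mul _ D (d x) hD) (ih _ ?_ (hD x))
    intro a b
    simp only [delta]
    rw [mul_add, hadd, hadd]
    ring

theorem dY_iter_add {k : Type*} [CommRing k] (n : ℕ) (a b : DualNumber (Polynomial k)) :
    dY^[n] (a + b) = dY^[n] a + dY^[n] b := by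
  induction n generalizing a b with
  | zero => rfl
  | succ n ih => simp only [Function.iterate_succ_apply, dY_add, ih]

theorem isDiffOpLE_iter {k : Type*} [CommRing k] (c : DualNumber (Polynomial k)) (n : ℕ) :
    IsDiffOpLE n (fun v => c * dY^[n] v) := by
  induction n with
  | zero => exact isDiffOpLE_mul 0 c
  | succ n ih =>
    have hadd : ∀ a b : DualNumber (Polynomial k),
        c * dY^[n] (a + b) = c * dY^[n] a + c * dY^[n] b := by
      intro a b
      rw [dY_iter_add, mul_add]
    have h := isDiffOpLE_comp_der (A := DualNumber (Polynomial k)) dY dY_mul n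
      (fun v => c * dY^[n] v) hadd ih
    simp only [Function.iterate_succ_apply]
    exact h

theorem lodayD_fst {k : Type*} [CommRing k] (n : ℕ) (u v : DualNumber (Polynomial k)) :
    TrivSqZeroExt.fst (lodayD n u v) = 0 := by
  simp [lodayD]

theorem lodayD_snd {k : Type*} [CommRing k] (n : ℕ) (u v : DualNumber (Polynomial k)) :
    TrivSqZeroExt.snd (lodayD n u v) =
      TrivSqZeroExt.fst u * Polynomial.derivative^[n] (TrivSqZeroExt.fst v) := by
  simp [lodayD, dY_iter_fst, mul_comm]

/-- **Remark (counterexample with nilpotents).** On `A = k[x,y]/(x²)` the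
bracket `D(u,v) = x·u·∂ⁿv/∂yⁿ` satisfies the Loday Jacobi identity and is a
bidifferential operator of order `≤ n` in each argument, yet it is not
skew-symmetric: a differential Loday bracket of order `n` which is not a Lie
bracket. -/
theorem loday_bracket_on_dual_numbers_not_skew
    {k : Type*} [Field k] [CharZero k] (n : ℕ) (hn : 1 ≤ n) :
    (∀ u v w : DualNumber (Polynomial k),
        lodayD n u (lodayD n v w) =
          lodayD n (lodayD n u v) w + lodayD n v (lodayD n u w)) ∧
    (∀ u : DualNumber (Polynomial k),
        IsDiffOpLE n (fun v => lodayD n u v) ∧ IsDiffOpLE n (fun v => lodayD n v u)) ∧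
    ¬ (∀ u v : DualNumber (Polynomial k), lodayD n u v = - lodayD n v u) := by
  refine ⟨?_, ?_, ?_⟩
  · intro u v w
    apply TrivSqZeroExt.ext
    · simp [lodayD_fst]
    · simp [lodayD_fst, lodayD_snd]
  · intro u
    refine ⟨isDiffOpLE_iter (DualNumber.eps * u) n, ?_⟩
    have h : (fun v => lodayD n v u) = fun v => (DualNumber.eps * dY^[n] u) * v := by
      funext v
      simp only [lodayD]
      ring
    rw [h]
    exact isDiffOpLE_mul n _
  · intro h
    have h1 := congrArg TrivSqZeroExt.snd (h 1 (TrivSqZeroExt.inl (Polynomial.X ^ n)))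
    rw [TrivSqZeroExt.snd_neg, lodayD_snd, lodayD_snd, TrivSqZeroExt.fst_one,
      TrivSqZeroExt.fst_inl, Polynomial.iterate_derivative_one (by omega),
      Polynomial.iterate_derivative_X_pow_eq_smul] at h1
    simp [Nat.descFactorial_self, Nat.factorial_ne_zero] at h1
end
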